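/- arXiv:0705.0821 — 2 statements merged into one kernel-verified Lean document; each statement's English description precedes it below -/
import Mathlib

section
/- Suppose p | (m+2). Then for every monomial x^a ∈ K(n) and every 1 ≤ i ≤ 2m, the maps H_{Sq(1)}(x^a) and H_{Sq(x_i)}(x^a) from K(n) to K(n) are inner derivations of K(n), where the p-power (x^a)^{[p]} used in H is x^a itself if x^a = x_i x_{i'} for some 1 ≤ i ≤ m or x^a = x_n, and 0 for all other monomials. (This shows Sq(1) and the Sq(x_i) lie in the kernel of the Hochschild map H, so they define restricted cohomology classes.) -/
/-!
The proof works over `ℤ`. The polynomial ring `PZ m` in the variables `x_1, …, x_n` carries the same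
contact bracket as `A(n)`, and `rho` reduces it modulo `p` and modulo the `p`-th powers. Let `z` be
`1` or some `x_i`. Over `ℤ` the powers of `ad z` have divided versions `(ad z)^r / r!` (`DPow`,
`dpow`), so `φ = (ad z)^p / p!` makes sense. It is not a derivation of the bracket: by the Leibniz
rule its defect, reduced modulo `p`, is exactly the squaring `Sq(z)` (`SqE_rho`), up to the terms
`[φ x, y]` and `[x, φ y]`. In other words `Sq(z)` is a coboundary over `ℤ`, although `φ` does not
descend to `A(n)`.

Summing this defect along the powers of `ad f`, the operator `H_{Sq(z)}(f)` telescopes, modulo `p`,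
to `φ ∘ T - T ∘ φ` up to inner derivations, where `T = (ad f)^p - ad f^{[p]}` (`HOp_SqE`). For a
monomial `f = x^a` the operator `T` vanishes modulo `p` (`pT_ppow`): by a weight argument the `p`-th
power of `ad f` is either zero or `ad f` itself, the latter for `x_i x_{i'}` and `x_n`, which act
diagonally on monomials. Hence `T ∘ φ` reduces to zero, and the reduction of `φ ∘ T` obeys the
Leibniz rule of a contact operator and is `ad w` for some `w` in `A(n)` (`exists_ad_dpow_pT`).

The element found in this way must lie in `K(n)`, that is, have no `x^τ`-component (`mem_Ksub`).
Since `p ∣ m + 2`, no bracket has one (`topc_br`), and `φ (f^{[p]}) = 0` for reasons of degree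
(`dpow_ppow`). For `w` itself, `D_n w` is a multiple of `φ ((ad f)^p 1)`. As `m ≥ 2`, there is a
conjugate pair `x_j`, `x_{j'}` not met by `ad z`; every monomial of `φ ((ad f)^p 1)` has degree
`p a_j` in `x_j`, whereas an `x^τ`-component of `w` would give one of degree `p - 1` (`coeffT_w`).
-/

set_option maxHeartbeats 1000000
set_option synthInstance.maxHeartbeats 400000

open scoped BigOperators
noncomputable section

variable (F : Type*) [Field F] (p n : ℕ)

/-- The ideal `(X_1^p, …, X_n^p)` of the polynomial ring. -/
def truncIdeal : Ideal (MvPolynomial (Fin n) F) :=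
  Ideal.span (Set.range fun i : Fin n => MvPolynomial.X i ^ p)

/-- The truncated polynomial algebra `A(n) = F[x_1,…,x_n]/(x_1^p,…,x_n^p)`. -/
abbrev TruncP := MvPolynomial (Fin n) F ⧸ truncIdeal F p n

/-- The monomial `x^a` in `A(n)`. -/
def xpow (a : Fin n → ℕ) : TruncP F p n :=
  Ideal.Quotient.mk _ (MvPolynomial.monomial (Finsupp.equivFunOnFinite.symm a) 1)

/-- Lift an `F`-linear map killing the truncation ideal to the quotient. -/
def liftF {N : Type*} [AddCommGroup N] [Module F N]
    (f : MvPolynomial (Fin n) F →ₗ[F] N)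
    (h : (truncIdeal F p n).restrictScalars F ≤ LinearMap.ker f) :
    TruncP F p n →ₗ[F] N :=
  (Submodule.liftQ ((truncIdeal F p n).restrictScalars F) f h) ∘ₗ
    (Submodule.Quotient.restrictScalarsEquiv F (truncIdeal F p n)).symm.toLinearMap

lemma liftF_mk {N : Type*} [AddCommGroup N] [Module F N]
    (f : MvPolynomial (Fin n) F →ₗ[F] N)
    (h : (truncIdeal F p n).restrictScalars F ≤ LinearMap.ker f)
    (x : MvPolynomial (Fin n) F) :
    liftF F p n f h (Ideal.Quotient.mk _ x) = f x := by
  simp only [liftF, LinearMap.coe_comp, Function.comp_apply, LinearEquiv.coe_coe]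
  have : (Ideal.Quotient.mk (truncIdeal F p n)) x = Submodule.Quotient.mk x := rfl
  rw [this, Submodule.Quotient.restrictScalarsEquiv_symm_mk, Submodule.liftQ_apply]

lemma truncIdeal_pderiv_mem [CharP F p] (j : Fin n) {f : MvPolynomial (Fin n) F}
    (hf : f ∈ truncIdeal F p n) :
    Ideal.Quotient.mk (truncIdeal F p n) (MvPolynomial.pderiv j f) = 0 := by
  classical
  let K : Ideal (MvPolynomial (Fin n) F) :=
    { carrier := {g | Ideal.Quotient.mk (truncIdeal F p n) (MvPolynomial.pderiv j g) = 0 ∧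
        Ideal.Quotient.mk (truncIdeal F p n) g = 0},
      add_mem' := by
        rintro a b ⟨ha1, ha2⟩ ⟨hb1, hb2⟩
        refine ⟨?_, ?_⟩
        · rw [map_add, map_add, ha1, hb1, add_zero]
        · rw [map_add, ha2, hb2, add_zero]
      zero_mem' := ⟨by rw [map_zero, map_zero], by rw [map_zero]⟩
      smul_mem' := by
        rintro c x ⟨hx1, hx2⟩
        refine ⟨?_, ?_⟩
        · have hL : MvPolynomial.pderiv j (c * x)
              = c * MvPolynomial.pderiv j x + x * MvPolynomial.pderiv j c := by
            have := (MvPolynomial.pderiv j).leibniz c x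
            simpa [smul_eq_mul, mul_comm] using this
          rw [smul_eq_mul, hL]
          rw [map_add, map_mul, map_mul, hx1, hx2, mul_zero, zero_mul, add_zero]
        · rw [smul_eq_mul, map_mul, hx2, mul_zero] }
  have hle : truncIdeal F p n ≤ K := by
    rw [truncIdeal, Ideal.span_le]
    rintro _ ⟨i, rfl⟩
    refine ⟨?_, ?_⟩
    · have hgen : MvPolynomial.pderiv j (MvPolynomial.X (R := F) i ^ p) = 0 := by
        rw [MvPolynomial.X_pow_eq_monomial, MvPolynomial.pderiv_monomial]
        rcases eq_or_ne i j with h | h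
        · subst h
          simp [Finsupp.single_apply, CharP.cast_eq_zero F p]
        · simp [Finsupp.single_apply, h]
      rw [hgen, map_zero]
    · exact Ideal.Quotient.eq_zero_iff_mem.mpr (Ideal.subset_span ⟨i, rfl⟩)
  exact (hle hf).1

lemma truncIdeal_support {f : MvPolynomial (Fin n) F} (hf : f ∈ truncIdeal F p n) :
    ∀ d ∈ f.support, ∃ i, p ≤ d i := by
  classical
  let K : Ideal (MvPolynomial (Fin n) F) :=
    { carrier := {g | ∀ d ∈ g.support, ∃ i, p ≤ d i},
      add_mem' := by
        intro a b ha hb d hd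
        rcases Finset.mem_union.mp (MvPolynomial.support_add hd) with h | h
        · exact ha d h
        · exact hb d h
      zero_mem' := by simp
      smul_mem' := by
        intro c x hx d hd
        rw [smul_eq_mul] at hd
        obtain ⟨d1, hd1, d2, hd2, rfl⟩ := Finset.mem_add.mp (MvPolynomial.support_mul c x hd)
        obtain ⟨i, hi⟩ := hx d2 hd2
        exact ⟨i, le_trans hi (by simp)⟩ }
  have hle : truncIdeal F p n ≤ K := by
    rw [truncIdeal, Ideal.span_le]
    rintro _ ⟨i, rfl⟩ d hd
    simp only [MvPolynomial.X_pow_eq_monomial] at hd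
    rw [MvPolynomial.support_monomial] at hd
    simp only [one_ne_zero, if_false] at hd
    rcases Finset.mem_singleton.mp hd with rfl
    exact ⟨i, by simp⟩
  exact hle hf

/-- The coefficient of `x^a` (for `a` componentwise `< p`) of an element of `A(n)`,
as a linear functional. For `a` not in the box this is defined to be `0`. -/
def coeffT (a : Fin n → ℕ) : TruncP F p n →ₗ[F] F :=
  if h : ∀ i, a i < p then
    liftF F p n
      { toFun := fun f => f.coeff (Finsupp.equivFunOnFinite.symm a),
        map_add' := fun f g => MvPolynomial.coeff_add _ f g,
        map_smul' := fun c f => MvPolynomial.coeff_smul _ c f }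
      (by
        intro f hf
        have hf' : f ∈ truncIdeal F p n := hf
        simp only [LinearMap.mem_ker, LinearMap.coe_mk, AddHom.coe_mk]
        by_contra hne
        have hmem : Finsupp.equivFunOnFinite.symm a ∈ f.support :=
          MvPolynomial.mem_support_iff.mpr hne
        obtain ⟨i, hi⟩ := truncIdeal_support F p n hf' _ hmem
        have heq : (Finsupp.equivFunOnFinite.symm a) i = a i := rfl
        have h2 := h i
        rw [heq] at hi
        omega)
  else 0

/-- The Jacobson–Witt algebra `W(n) = Der_F A(n)`. -/
abbrev Witt := Derivation F (TruncP F p n) (TruncP F p n)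

def DjL [CharP F p] (j : Fin n) : TruncP F p n →ₗ[F] TruncP F p n :=
  liftF F p n
    ((Ideal.Quotient.mkₐ F (truncIdeal F p n)).toLinearMap ∘ₗ (MvPolynomial.pderiv j).toLinearMap)
    (by
      intro f hf
      have hf' : f ∈ truncIdeal F p n := hf
      simp only [LinearMap.mem_ker, LinearMap.coe_comp, Function.comp_apply,
        AlgHom.toLinearMap_apply, Ideal.Quotient.mkₐ_eq_mk, Derivation.coeFn_coe]
      exact truncIdeal_pderiv_mem F p n j hf')

lemma DjL_mk [CharP F p] (j : Fin n) (f : MvPolynomial (Fin n) F) :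
    DjL F p n j (Ideal.Quotient.mk _ f) = Ideal.Quotient.mk _ (MvPolynomial.pderiv j f) := by
  rw [DjL, liftF_mk]
  simp

/-- The partial derivative `D_j = ∂/∂x_j`, as a derivation of `A(n)`. -/
def Dj [CharP F p] (j : Fin n) : Witt F p n where
  toLinearMap := DjL F p n j
  map_one_eq_zero' := by
    have h1 : (1 : TruncP F p n) = Ideal.Quotient.mk _ (1 : MvPolynomial (Fin n) F) :=
      (map_one _).symm
    rw [LinearMap.coe_mk] at *
    show DjL F p n j 1 = 0
    rw [h1, DjL_mk]
    simp
  leibniz' := by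
    intro a b
    obtain ⟨x, rfl⟩ := Ideal.Quotient.mk_surjective a
    obtain ⟨y, rfl⟩ := Ideal.Quotient.mk_surjective b
    show DjL F p n j _ = _ • DjL F p n j _ + _ • DjL F p n j _
    rw [← map_mul, DjL_mk, DjL_mk, DjL_mk, smul_eq_mul, smul_eq_mul, ← map_mul, ← map_mul,
      ← map_add]
    congr 1
    have := (MvPolynomial.pderiv j).leibniz x y
    simpa [smul_eq_mul] using this
section Cochains

variable (F : Type*) [Field F] {L : Type*} [AddCommGroup L] [Module F L]

/-- A map of two arguments which is `F`-linear in each argument. -/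
def IsBilinear (ψ : L → L → L) : Prop :=
  (∀ x, IsLinearMap F (ψ x)) ∧ ∀ y, IsLinearMap F fun x => ψ x y

/-- A 2-cochain with adjoint coefficients: an alternating `F`-bilinear map. -/
def IsCochain (ψ : L → L → L) : Prop :=
  IsBilinear F ψ ∧ ∀ x, ψ x x = 0

/-- A 2-cocycle with adjoint coefficients, for the bracket `B`. -/
def IsCocycle (B : L → L → L) (ψ : L → L → L) : Prop :=
  IsCochain F ψ ∧ ∀ x y z,
    B x (ψ y z) - B y (ψ x z) + B z (ψ x y)
      - ψ (B x y) z + ψ (B x z) y - ψ (B y z) x = 0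

/-- A 2-coboundary with adjoint coefficients, for the bracket `B`. -/
def IsCoboundary (B : L → L → L) (ψ : L → L → L) : Prop :=
  ∃ φ : L →ₗ[F] L, ∀ x y, ψ x y = B x (φ y) - B y (φ x) - φ (B x y)

/-- A 2-cocycle of a subspace `V` (closed under the bracket `B` of the ambient space),
with adjoint coefficients.  The cochain is recorded as an everywhere-defined bilinear
map preserving `V`; only its restriction to `V` is relevant. -/
def IsCocycleOn (V : Submodule F L) (B : L → L → L) (ψ : L → L → L) : Prop :=
  IsBilinear F ψ ∧ (∀ x ∈ V, ∀ y ∈ V, ψ x y ∈ V) ∧ (∀ x ∈ V, ψ x x = 0) ∧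
    ∀ x ∈ V, ∀ y ∈ V, ∀ z ∈ V,
      B x (ψ y z) - B y (ψ x z) + B z (ψ x y)
        - ψ (B x y) z + ψ (B x z) y - ψ (B y z) x = 0

/-- A 2-coboundary of a subspace `V`, with adjoint coefficients. -/
def IsCoboundaryOn (V : Submodule F L) (B : L → L → L) (ψ : L → L → L) : Prop :=
  ∃ φ : L →ₗ[F] L, (∀ x ∈ V, φ x ∈ V) ∧
    ∀ x ∈ V, ∀ y ∈ V, ψ x y = B x (φ y) - B y (φ x) - φ (B x y)

/-- A derivation of a subspace `V` closed under the bracket `B`: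
an `F`-linear map preserving `V` and satisfying the Leibniz rule on `V`. -/
def IsDerivationOn (V : Submodule F L) (B : L → L → L) (γ : L →ₗ[F] L) : Prop :=
  (∀ x ∈ V, γ x ∈ V) ∧ ∀ x ∈ V, ∀ y ∈ V, γ (B x y) = B (γ x) y + B x (γ y)

/-- An inner derivation of a subspace `V`: a map agreeing on `V` with `ad z = B z ·`
for some `z ∈ V`. -/
def IsInnerOn (V : Submodule F L) (B : L → L → L) (δ : L → L) : Prop :=
  ∃ z ∈ V, ∀ y ∈ V, δ y = B z y

/-- An inner derivation: `δ = ad z = B z ·` for some `z`. -/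
def IsInner (B : L → L → L) (δ : L → L) : Prop := ∃ z, ∀ y, δ y = B z y

/-- The squaring `Sq(γ)(x,y) = ∑_{i=1}^{p-1} [γ^i(x), γ^{p-i}(y)]/(i!·(p-i)!)`
of an operator `γ`, relative to the bracket `B`. -/
def Squaring (p : ℕ) (B : L → L → L) (γ : L → L) : L → L → L := fun x y =>
  ∑ i ∈ Finset.Ioo 0 p,
    (((Nat.factorial i * Nat.factorial (p - i) : ℕ) : F))⁻¹ • B (γ^[i] x) (γ^[p - i] y)

/-- `Sq(z) := Sq(ad z)` for an element `z`. -/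
def SqE (p : ℕ) (B : L → L → L) (z : L) : L → L → L :=
  Squaring F p B (fun y => B z y)

/-- The Hochschild operator
`H_ψ(x)(y) = ∑_{j=0}^{p-1} (ad x)^j (ψ(x, (ad x)^{p-1-j}(y))) − ψ(x^{[p]}, y)`,
for the bracket `B`, the 2-cochain `ψ`, and the chosen `p`-th power `xp` of `x`. -/
def HOp (p : ℕ) (B : L → L → L) (ψ : L → L → L) (x xp : L) : L → L := fun y =>
  (∑ j ∈ Finset.range p, (fun z => B x z)^[j] (ψ x ((fun z => B x z)^[p - 1 - j] y)))
    - ψ xp y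

end Cochains

section Symplectic

variable (F : Type*) [Field F] (m : ℕ)

/-- The sign `σ(j)` for `1 ≤ j ≤ 2m`: `1` if `j ≤ m` and `−1` if `j > m`. -/
def sg (j : Fin (2 * m)) : F := if (j : ℕ) < m then 1 else -1

/-- The conjugate index `j' = j ± m`. -/
def cj (j : Fin (2 * m)) : Fin (2 * m) :=
  if h : (j : ℕ) < m then ⟨(j : ℕ) + m, by omega⟩
  else ⟨(j : ℕ) - m, by have := j.isLt; omega⟩

end Symplectic

section Contact

variable (F : Type*) [Field F] (p m : ℕ) [CharP F p]

/-- The operator `D_H(f)(g) = ∑_{j=1}^{2m} σ(j)·D_j(f)·D_{j'}(g)` on `A(2m+1)`. -/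
def DHK (f g : TruncP F p (2 * m + 1)) : TruncP F p (2 * m + 1) :=
  ∑ j : Fin (2 * m),
    sg F m j • (Dj F p (2 * m + 1) j.castSucc f * Dj F p (2 * m + 1) (cj m j).castSucc g)

/-- The Euler-type operator `E(g) = ∑_{i=1}^{2m} x_i D_i(g) + 2 x_n D_n(g) − 2g`,
so that `E(x^b) = deg(x^b)·x^b` for the contact grading. -/
def EulK (g : TruncP F p (2 * m + 1)) : TruncP F p (2 * m + 1) :=
  (∑ j : Fin (2 * m),
      xpow F p (2 * m + 1) (Pi.single j.castSucc 1) * Dj F p (2 * m + 1) j.castSucc g)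
    + (2 : TruncP F p (2 * m + 1)) *
        (xpow F p (2 * m + 1) (Pi.single (Fin.last (2 * m)) 1) *
          Dj F p (2 * m + 1) (Fin.last (2 * m)) g)
    - (2 : TruncP F p (2 * m + 1)) * g

/-- The contact bracket on `K'(n) = A(n)`, `n = 2m+1`:
`[f,g] = D_H(f)(g) + D_n(f)·E(g) − D_n(g)·E(f)`, which on monomials is
`[x^a, x^b] = D_H(x^a)(x^b) + (a_n·deg(x^b) − b_n·deg(x^a))·x^{a+b−ε_n}`. -/
def Kbr (f g : TruncP F p (2 * m + 1)) : TruncP F p (2 * m + 1) :=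
  DHK F p m f g
    + Dj F p (2 * m + 1) (Fin.last (2 * m)) f * EulK F p m g
    - Dj F p (2 * m + 1) (Fin.last (2 * m)) g * EulK F p m f

/-- The contact algebra `K(n) = [K'(n), K'(n)]`: all of `K'(n)` if `p ∤ (m+2)`, and
the span of the monomials `x^a`, `a ≠ τ`, if `p ∣ (m+2)`. -/
def Ksub : Submodule F (TruncP F p (2 * m + 1)) :=
  if p ∣ (m + 2) then
    Submodule.span F
      {f | ∃ a : Fin (2 * m + 1) → ℕ,
        (∀ i, a i < p) ∧ a ≠ (fun _ => p - 1) ∧ f = xpow F p (2 * m + 1) a}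
  else ⊤

open scoped Classical in
/-- The `[p]`-th power of the monomial `x^a` in `K(n)`: `x^a` itself if
`x^a = x_i x_{i'}` (`1 ≤ i ≤ m`) or `x^a = x_n`, and `0` otherwise. -/
noncomputable def KpPow (a : Fin (2 * m + 1) → ℕ) : TruncP F p (2 * m + 1) :=
  if (∃ i : Fin (2 * m), (i : ℕ) < m ∧
        a = Pi.single i.castSucc 1 + Pi.single (cj m i).castSucc 1)
      ∨ a = Pi.single (Fin.last (2 * m)) 1
  then xpow F p (2 * m + 1) a else 0

end Contact

namespace ContactAux

/-! ### Contact brackets on rings with commuting derivations -/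

/-- Additive derivations of a commutative ring. -/
abbrev CDer (R : Type*) [CommRing R] := Derivation ℤ R R

/-- A commutative ring with commuting derivations `d j` and elements `x j`, `j < 2m+1`, such that
`d j (x k) = δ_{jk}`: the structure from which the contact bracket is built.  It is used for the
polynomial ring over `ℤ` and for the truncated polynomial algebra. -/
structure CData (m : ℕ) (R : Type*) [CommRing R] where
  d : Fin (2 * m + 1) → CDer R
  x : Fin (2 * m + 1) → R
  d_x : ∀ j k, d j (x k) = if j = k then 1 else 0
  d_comm : ∀ i j a, d i (d j a) = d j (d i a)

section Generic

variable {m : ℕ} {R : Type*} [CommRing R] (C : CData m R)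

/-- The sign `σ(j)` as an element of a ring. -/
def sgn (R : Type*) [CommRing R] {m : ℕ} (j : Fin (2 * m)) : R := if (j : ℕ) < m then 1 else -1

lemma cj_cj (j : Fin (2 * m)) : cj m (cj m j) = j := by
  have hj := j.isLt
  apply Fin.ext
  by_cases h : (j : ℕ) < m
  · simp [cj, h]
  · have h2 : (j : ℕ) - m < m := by omega
    simp only [cj, h, h2, dite_true, dite_false]
    omega

lemma cj_ne (j : Fin (2 * m)) : cj m j ≠ j := by
  have := j.isLt
  unfold cj
  intro h
  have := congrArg Fin.val h
  split_ifs at this <;> simp_all <;> omega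

lemma cj_eq_iff (i j : Fin (2 * m)) : cj m i = j ↔ i = cj m j :=
  ⟨fun h => by rw [← h, cj_cj], fun h => by rw [h, cj_cj]⟩

lemma sgn_cj (j : Fin (2 * m)) : sgn R (cj m j) = - sgn R j := by
  have := j.isLt
  unfold sgn cj
  by_cases h : (j : ℕ) < m
  · simp [h]
  · have h2 : (j : ℕ) - m < m := by omega
    simp [h, h2]

lemma sgn_mul_self (j : Fin (2 * m)) : sgn R j * sgn R j = 1 := by
  unfold sgn
  split_ifs <;> simp

lemma sum_cj {M : Type*} [AddCommMonoid M] (f : Fin (2 * m) → M) :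
    ∑ j, f (cj m j) = ∑ j, f j :=
  Equiv.sum_comp (Function.Involutive.toPerm (cj m) cj_cj) f

/-- The coordinate `x_n`, `n = 2m+1`. -/
def CData.t : R := C.x (Fin.last (2 * m))
/-- The derivation `D_n`. -/
def CData.dt : CDer R := C.d (Fin.last (2 * m))
/-- The coordinate `x_i`, `i ≤ 2m`. -/
def CData.y (i : Fin (2 * m)) : R := C.x i.castSucc
/-- The derivation `D_i`, `i ≤ 2m`. -/
def CData.dy (i : Fin (2 * m)) : CDer R := C.d i.castSucc

lemma dy_y (i j : Fin (2 * m)) : C.dy i (C.y j) = if i = j then 1 else 0 := by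
  simp [CData.dy, CData.y, C.d_x]

lemma dy_t (i : Fin (2 * m)) : C.dy i C.t = 0 := by
  simp [CData.dy, CData.t, C.d_x, (Fin.castSucc_lt_last i).ne]

lemma dt_y (i : Fin (2 * m)) : C.dt (C.y i) = 0 := by
  simp [CData.dt, CData.y, C.d_x, (Fin.castSucc_lt_last i).ne']

lemma dt_t : C.dt C.t = 1 := by
  simp [CData.dt, CData.t, C.d_x]

/-- The Poisson part `D_H(f)(g)` of the contact bracket. -/
def CData.po (f g : R) : R := ∑ j, sgn R j * (C.dy j f * C.dy (cj m j) g)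

/-- The Euler derivation `∑ x_i D_i + 2 x_n D_n`. -/
def CData.eu (g : R) : R := (∑ j, C.y j * C.dy j g) + 2 * (C.t * C.dt g)

/-- The contact bracket. -/
def CData.br (f g : R) : R :=
  C.po f g + C.dt f * (C.eu g - 2 * g) - C.dt g * (C.eu f - 2 * f)

lemma po_add_right (f g h : R) : C.po f (g + h) = C.po f g + C.po f h := by
  simp [CData.po, mul_add, Finset.sum_add_distrib]

lemma po_mul_right (f g h : R) : C.po f (g * h) = C.po f g * h + g * C.po f h := by
  simp only [CData.po, Derivation.leibniz, smul_eq_mul, Finset.sum_mul, Finset.mul_sum,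
    ← Finset.sum_add_distrib]
  exact Finset.sum_congr rfl fun _ _ => by ring

lemma po_swap (f g : R) : C.po f g = - C.po g f := by
  rw [CData.po, CData.po, ← sum_cj, ← Finset.sum_neg_distrib]
  exact Finset.sum_congr rfl fun j _ => by rw [sgn_cj, cj_cj]; ring

lemma eu_add (g h : R) : C.eu (g + h) = C.eu g + C.eu h := by
  simp only [CData.eu, map_add, mul_add, Finset.sum_add_distrib]; ring

lemma eu_mul (g h : R) : C.eu (g * h) = C.eu g * h + g * C.eu h := by
  have : ∑ j, C.y j * C.dy j (g * h)
      = (∑ j, C.y j * C.dy j g) * h + g * ∑ j, C.y j * C.dy j h := by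
    simp only [Derivation.leibniz, smul_eq_mul, Finset.sum_mul, Finset.mul_sum,
      ← Finset.sum_add_distrib]
    exact Finset.sum_congr rfl fun _ _ => by ring
  rw [CData.eu, this, CData.eu, CData.eu, Derivation.leibniz, smul_eq_mul, smul_eq_mul]; ring

lemma br_add_right (f g h : R) : C.br f (g + h) = C.br f g + C.br f h := by
  simp only [CData.br, po_add_right, eu_add, map_add]; ring

lemma br_swap (f g : R) : C.br f g = - C.br g f := by
  rw [CData.br, CData.br, po_swap]; ring

lemma br_add_left (f g h : R) : C.br (f + g) h = C.br f h + C.br g h := by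
  rw [br_swap, br_add_right, neg_add, ← br_swap, ← br_swap]

/-- `ad f` as an additive map. -/
def CData.ad (f : R) : R →+ R := AddMonoidHom.mk' (C.br f) (br_add_right C f)

@[simp] lemma ad_apply (f g : R) : C.ad f g = C.br f g := rfl

lemma br_zero_right (f : R) : C.br f 0 = 0 := map_zero (C.ad f)
lemma br_neg_right (f g : R) : C.br f (-g) = -C.br f g := map_neg (C.ad f) g
lemma br_sub_right (f g h : R) : C.br f (g - h) = C.br f g - C.br f h := map_sub (C.ad f) g h
lemma br_nsmul_right (k : ℕ) (f g : R) : C.br f (k • g) = k • C.br f g := map_nsmul (C.ad f) k g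
lemma br_zsmul_right (k : ℤ) (f g : R) : C.br f (k • g) = k • C.br f g := map_zsmul (C.ad f) k g
lemma br_sum_right {ι : Type*} (s : Finset ι) (f : R) (g : ι → R) :
    C.br f (∑ i ∈ s, g i) = ∑ i ∈ s, C.br f (g i) := map_sum (C.ad f) g s

lemma br_zero_left (f : R) : C.br 0 f = 0 := by rw [br_swap, br_zero_right, neg_zero]
lemma br_sub_left (f g h : R) : C.br (f - g) h = C.br f h - C.br g h := by
  rw [br_swap, br_sub_right, br_swap C h f, br_swap C h g]; ring
lemma br_nsmul_left (k : ℕ) (f g : R) : C.br (k • f) g = k • C.br f g := by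
  rw [br_swap, br_nsmul_right, ← smul_neg, ← br_swap]
lemma br_zsmul_left (k : ℤ) (f g : R) : C.br (k • f) g = k • C.br f g := by
  rw [br_swap, br_zsmul_right, ← smul_neg, ← br_swap]
lemma br_sum_left {ι : Type*} (s : Finset ι) (f : ι → R) (g : R) :
    C.br (∑ i ∈ s, f i) g = ∑ i ∈ s, C.br (f i) g := by
  rw [br_swap, br_sum_right, ← Finset.sum_neg_distrib]
  exact Finset.sum_congr rfl fun _ _ => (br_swap _ _ _).symm

lemma po_one_right (f : R) : C.po f 1 = 0 := by simp [CData.po]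
lemma eu_one : C.eu 1 = 0 := by simp [CData.eu]

lemma br_one_right (f : R) : C.br f 1 = - 2 * C.dt f := by
  simp [CData.br, po_one_right, eu_one]; ring

lemma br_one_left (f : R) : C.br 1 f = 2 * C.dt f := by
  rw [br_swap, br_one_right]; ring

lemma br_self_of_two (h2 : IsUnit (2 : R)) (f : R) : C.br f f = 0 := by
  have h := br_swap C f f
  have : (2 : R) * C.br f f = 0 := by rw [two_mul]; nth_rewrite 1 [h]; ring
  exact (h2.mul_right_eq_zero).1 this

lemma br_mul_right (f a b : R) :
    C.br f (a * b) = C.br f a * b + a * C.br f b - C.br f 1 * (a * b) := by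
  rw [br_one_right]; simp only [CData.br, po_mul_right, eu_mul, Derivation.leibniz, smul_eq_mul]; ring

lemma po_y_left (i : Fin (2 * m)) (g : R) : C.po (C.y i) g = sgn R i * C.dy (cj m i) g := by
  rw [CData.po, Finset.sum_eq_single i]
  · simp [dy_y]
  · intro j _ h; simp [dy_y, h]
  · simp

lemma po_t_left (g : R) : C.po C.t g = 0 := by simp [CData.po, dy_t]

lemma eu_y (i : Fin (2 * m)) : C.eu (C.y i) = C.y i := by
  simp [CData.eu, dy_y, dt_y]

lemma eu_t : C.eu C.t = 2 * C.t := by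
  simp [CData.eu, dy_t, dt_t]

lemma br_y_left (i : Fin (2 * m)) (g : R) :
    C.br (C.y i) g = sgn R i * C.dy (cj m i) g + C.y i * C.dt g := by
  rw [CData.br, po_y_left, dt_y, eu_y]; ring

lemma br_t_left (g : R) : C.br C.t g = C.eu g - 2 * g := by
  rw [CData.br, po_t_left, dt_t, eu_t]; ring

lemma br_y_y (i j : Fin (2 * m)) :
    C.br (C.y i) (C.y j) = if i = cj m j then sgn R i else 0 := by
  rw [br_y_left, dy_y, dt_y]
  simp [cj_eq_iff]

lemma br_y_one (i : Fin (2 * m)) : C.br (C.y i) 1 = 0 := by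
  rw [br_one_right, dt_y, mul_zero]

lemma br_t_y (i : Fin (2 * m)) : C.br C.t (C.y i) = - C.y i := by
  rw [br_t_left, eu_y]; ring

lemma br_y_t (i : Fin (2 * m)) : C.br (C.y i) C.t = C.y i := by
  rw [br_swap, br_t_y, neg_neg]

lemma br_t_one : C.br C.t 1 = -2 := by
  rw [br_one_right, dt_t, mul_one]

lemma br_one_t : C.br 1 C.t = 2 := by
  rw [br_one_left, dt_t, mul_one]

lemma br_t_t : C.br C.t C.t = 0 := by
  rw [br_t_left, eu_t, sub_self]

lemma br_one_one : C.br 1 1 = 0 := by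
  rw [br_one_left]; simp

lemma br_one_y (i : Fin (2 * m)) : C.br 1 (C.y i) = 0 := by
  rw [br_one_left, dt_y, mul_zero]

end Generic

/-! ### Leibniz formulas for iterates -/

section Leibniz

lemma iterate_bilin {A B C : Type*} [AddCommMonoid A] [AddCommMonoid B] [AddCommMonoid C]
    (M : A →+ B →+ C) (T : C →+ C) (U : A → A) (V : B → B)
    (h : ∀ a b, T (M a b) = M (U a) b + M a (V b)) (r : ℕ) (a : A) (b : B) :
    T^[r] (M a b) = ∑ ij ∈ Finset.HasAntidiagonal.antidiagonal r, r.choose ij.1 • M (U^[ij.1] a) (V^[ij.2] b) := by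
  induction r with
  | zero => simp
  | succ r ih =>
    rw [Function.iterate_succ_apply', ih, map_sum,
      Finset.sum_antidiagonal_choose_succ_nsmul (fun i j => M (U^[i] a) (V^[j] b)),
      ← Finset.sum_add_distrib]
    refine Finset.sum_congr rfl fun ij hij => ?_
    rw [map_nsmul, h, ← Function.iterate_succ_apply' U, ← Function.iterate_succ_apply' V,
      nsmul_add, add_comm]
    congr 2
    rw [Finset.HasAntidiagonal.mem_antidiagonal] at hij
    exact Nat.choose_symm_of_eq_add (by omega)

end Leibniz

/-- A Leibniz sum of prime order has only its two extreme terms modulo that prime. -/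
lemma sum_choose_prime {M : Type*} [AddCommGroup M] {q : ℕ} (hq : q.Prime) (g : ℕ → ℕ → M) :
    ∃ h, ∑ ij ∈ Finset.HasAntidiagonal.antidiagonal q, q.choose ij.1 • g ij.1 ij.2
      = g q 0 + g 0 q + q • h := by
  refine ⟨∑ i ∈ Finset.range (q - 1), (q.choose (i + 1) / q) • g (i + 1) (q - (i + 1)), ?_⟩
  obtain ⟨k, rfl⟩ : ∃ k, q = k + 1 := ⟨q - 1, by have := hq.pos; omega⟩
  rw [Finset.Nat.sum_antidiagonal_eq_sum_range_succ_mk, Finset.sum_range_succ,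
    Finset.sum_range_succ', Finset.smul_sum]
  simp only [Nat.choose_zero_right, Nat.choose_self, one_smul, tsub_zero, tsub_self,
    Nat.add_sub_cancel]
  rw [add_assoc, add_comm, add_comm (g 0 _)]
  congr 1
  refine Finset.sum_congr rfl fun i hi => ?_
  rw [Finset.mem_range] at hi
  rw [smul_smul, Nat.mul_div_cancel' (hq.dvd_choose_self (by omega) (by omega))]

/-- The polynomial ring over `ℤ` in which the divided powers live. -/
abbrev PZ (m : ℕ) := MvPolynomial (Fin (2 * m + 1)) ℤ

/-- The partial derivatives of `PZ m` for the canonical `ℤ`-module structure. -/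
def dP {m : ℕ} (j : Fin (2 * m + 1)) : CDer (PZ m) :=
  Derivation.mk' (AddMonoidHom.toIntLinearMap
      ((MvPolynomial.pderiv j : Derivation ℤ (PZ m) (PZ m)) : PZ m →ₗ[ℤ] PZ m).toAddMonoidHom)
    fun a b => (MvPolynomial.pderiv j).leibniz a b

lemma dP_apply {m : ℕ} (j : Fin (2 * m + 1)) (g : PZ m) : dP j g = MvPolynomial.pderiv j g := rfl

/-- The contact structure of the integral polynomial ring. -/
def CP (m : ℕ) : CData m (PZ m) where
  d := dP
  x j := MvPolynomial.X j
  d_x j k := by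
    rw [dP_apply, MvPolynomial.pderiv_X]
    simp [Pi.single_apply, eq_comm]
  d_comm i j a := by
    refine MvPolynomial.ext _ _ fun c => ?_
    simp only [dP_apply, MvPolynomial.coeff_pderiv]
    rw [add_right_comm]
    by_cases h : i = j
    · subst h; rfl
    · simp [Finsupp.single_apply, h, Ne.symm h]; ring

section FirstOrder

variable {m : ℕ} {A : Type*} [CommRing A]

/-- First-order operators along a ring homomorphism `ρ`: the difference `D - D(1) ρ` is a derivation
along `ρ`. Both `ad f` and its reductions are of this kind. -/
def IsFO (ρ : PZ m →+* A) (D : PZ m →+ A) : Prop :=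
  ∀ a b, D (a * b) = D a * ρ b + ρ a * D b - D 1 * (ρ a * ρ b)

/-- A first-order operator is determined by its values at `1` and at the variables. -/
lemma IsFO.eq_zero {ρ : PZ m →+* A} {D : PZ m →+ A} (h : IsFO ρ D) (h1 : D 1 = 0)
    (hy : ∀ i, D ((CP m).y i) = 0) (ht : D (CP m).t = 0) (g : PZ m) : D g = 0 := by
  induction g using MvPolynomial.induction_on with
  | C a =>
    have : (MvPolynomial.C a : PZ m) = a • 1 := by simp
    rw [this, map_zsmul, h1, smul_zero]
  | add p q hp hq => rw [map_add, hp, hq, add_zero]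
  | mul_X p i hp =>
    have hX : D (MvPolynomial.X i) = 0 := by
      induction i using Fin.lastCases with
      | last => exact ht
      | cast i => exact hy i
    rw [h, hp, hX, h1]; ring

lemma IsFO.ext {ρ : PZ m →+* A} {D D' : PZ m →+ A} (h : IsFO ρ D) (h' : IsFO ρ D')
    (h1 : D 1 = D' 1) (hy : ∀ i, D ((CP m).y i) = D' ((CP m).y i))
    (ht : D (CP m).t = D' (CP m).t) (g : PZ m) : D g = D' g := by
  have hs : IsFO ρ (D - D') := by
    intro a b
    simp only [AddMonoidHom.sub_apply, h a b, h' a b]; ring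
  have := hs.eq_zero (by simp [h1]) (by simp [hy]) (by simp [ht]) g
  rwa [AddMonoidHom.sub_apply, sub_eq_zero] at this

end FirstOrder

section Integral

variable {m : ℕ}

lemma nsmul_cancel {k : ℕ} (hk : k ≠ 0) {a b : PZ m} (h : k • a = k • b) : a = b := by
  rw [nsmul_eq_mul, nsmul_eq_mul] at h
  exact mul_left_cancel₀ (Nat.cast_ne_zero.mpr hk) h

lemma br_self (f : PZ m) : (CP m).br f f = 0 := by
  refine nsmul_cancel (k := 2) two_ne_zero ?_
  rw [smul_zero, two_nsmul]
  nth_rewrite 1 [br_swap]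
  rw [neg_add_cancel]

/-- The Jacobiator, as an operator in its last argument. -/
def jac (f a : PZ m) : PZ m →+ PZ m :=
  ((CP m).ad f).comp ((CP m).ad a) - (CP m).ad ((CP m).br f a) - ((CP m).ad a).comp ((CP m).ad f)

lemma jac_apply (f a b : PZ m) : jac f a b = (CP m).br f ((CP m).br a b)
    - (CP m).br ((CP m).br f a) b - (CP m).br a ((CP m).br f b) := rfl

lemma jac_fo (f a : PZ m) : IsFO (RingHom.id _) (jac f a) := by
  intro g h
  simp only [jac_apply, RingHom.id_apply, br_mul_right, br_add_right, br_sub_right]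
  ring

lemma jac_swap (f a b : PZ m) : jac f a b = - jac a f b := by
  rw [jac_apply, jac_apply, br_swap _ a f, ← zero_sub ((CP m).br f a), br_sub_left, br_zero_left]
  ring

lemma jac_swap' (f a b : PZ m) : jac f a b = - jac f b a := by
  rw [jac_apply, jac_apply, br_swap _ b a, br_swap _ ((CP m).br f a) b, br_neg_right,
    br_swap _ a ((CP m).br f b)]
  ring

lemma br_int (f : PZ m) (k : ℤ) : (CP m).br f (k : PZ m) = k * (CP m).br f 1 := by
  have : (k : PZ m) = k • 1 := by simp
  rw [this, br_zsmul_right]; simp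

/-- The Jacobiator is a first-order operator in each argument, so the Jacobi identity reduces to
the generators `1, x_1, …, x_n`. -/
lemma jac_eq_zero (f a b : PZ m) : jac f a b = 0 := by
  have hom (i j : Fin (2 * m)) : ∃ k : ℤ, (CP m).br ((CP m).y i) ((CP m).y j) = k := by
    rw [br_y_y]
    refine ⟨if i = cj m j then sgn ℤ i else 0, ?_⟩
    split_ifs <;> simp [sgn]
  have hs (f b : PZ m) : jac f f b = 0 := by
    rw [jac_apply, br_self, br_zero_left]; ring
  have hs' (f b : PZ m) : jac f b b = 0 := by
    rw [jac_apply, br_self, br_zero_right, br_swap]; ring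
  -- values on generators, up to the order of the arguments
  have h1yy (i j) : jac 1 ((CP m).y i) ((CP m).y j) = 0 := by
    obtain ⟨k, hk⟩ := hom i j
    rw [jac_apply, br_one_y, br_one_y, hk, br_int, br_one_one, br_zero_left, br_zero_right]; ring
  have h1yt (i) : jac 1 ((CP m).y i) (CP m).t = 0 := by
    have : (2 : PZ m) = ((2 : ℤ) : PZ m) := by simp
    rw [jac_apply, br_one_y, br_y_t, br_one_y, br_zero_left, br_one_t, this, br_int, br_y_one]
    ring
  have hyyt (i j) : jac ((CP m).y i) ((CP m).y j) (CP m).t = 0 := by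
    obtain ⟨k, hk⟩ := hom i j
    rw [jac_apply, br_y_t, br_y_t, br_swap _ ((CP m).y j), hk, br_swap _ _ (CP m).t, br_int,
      br_t_one]
    ring
  have hyyy (i j l) : jac ((CP m).y i) ((CP m).y j) ((CP m).y l) = 0 := by
    obtain ⟨k, hk⟩ := hom i j
    obtain ⟨k', hk'⟩ := hom j l
    obtain ⟨k'', hk''⟩ := hom i l
    rw [jac_apply, hk, hk', hk'', br_swap _ _ ((CP m).y l)]
    simp [br_int, br_y_one]
  -- two generators
  have h1y (i) (g) : jac 1 ((CP m).y i) g = 0 :=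
    (jac_fo _ _).eq_zero (by rw [jac_swap', jac_swap, hs]; simp) (h1yy i) (h1yt i) g
  have h1t (g) : jac 1 (CP m).t g = 0 :=
    (jac_fo _ _).eq_zero (by rw [jac_swap', hs, neg_zero])
      (fun i => by rw [jac_swap', h1yt, neg_zero]) (hs' _ _) g
  have hyy (i j) (g) : jac ((CP m).y i) ((CP m).y j) g = 0 :=
    (jac_fo _ _).eq_zero (by rw [jac_swap', jac_swap, h1yy]; simp) (hyyy i j) (hyyt i j) g
  have hyt (i) (g) : jac ((CP m).y i) (CP m).t g = 0 :=
    (jac_fo _ _).eq_zero (by rw [jac_swap', jac_swap, h1yt]; simp)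
      (fun j => by rw [jac_swap', hyyt, neg_zero]) (hs' _ _) g
  -- one generator
  have h1 (a g) : jac 1 a g = 0 :=
    (jac_fo _ _).eq_zero (by rw [jac_swap', hs, neg_zero])
      (fun i => by rw [jac_swap', h1y, neg_zero]) (by rw [jac_swap', h1t, neg_zero]) g
  have hy (i) (a g) : jac ((CP m).y i) a g = 0 :=
    (jac_fo _ _).eq_zero (by rw [jac_swap', jac_swap, h1y]; simp)
      (fun j => by rw [jac_swap', hyy, neg_zero]) (by rw [jac_swap', hyt, neg_zero]) g
  have ht (a g) : jac (CP m).t a g = 0 :=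
    (jac_fo _ _).eq_zero (by rw [jac_swap', jac_swap, h1t]; simp)
      (fun j => by rw [jac_swap', jac_swap, hyt]; simp) (by rw [jac_swap', hs, neg_zero]) g
  exact (jac_fo _ _).eq_zero (by rw [jac_swap', jac_swap, h1]; simp)
      (fun j => by rw [jac_swap', jac_swap, hy]; simp)
      (by rw [jac_swap', jac_swap, ht]; simp) b

lemma jacobi (f a b : PZ m) : (CP m).br f ((CP m).br a b)
    = (CP m).br ((CP m).br f a) b + (CP m).br a ((CP m).br f b) := by
  have := jac_eq_zero f a b
  rw [jac_apply] at this
  linear_combination this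

/-- The bracket as a biadditive map. -/
def brHom (m : ℕ) : PZ m →+ PZ m →+ PZ m :=
  AddMonoidHom.mk' (CP m).ad fun a b => AddMonoidHom.ext fun c => br_add_left _ a b c

lemma brHom_apply (a b : PZ m) : brHom m a b = (CP m).br a b := rfl

/-- Leibniz formula for iterates of `ad f` and the bracket. -/
lemma iterate_br (f : PZ m) (r : ℕ) (a b : PZ m) :
    ((CP m).br f)^[r] ((CP m).br a b) = ∑ ij ∈ Finset.HasAntidiagonal.antidiagonal r,
      r.choose ij.1 • (CP m).br (((CP m).br f)^[ij.1] a) (((CP m).br f)^[ij.2] b) :=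
  iterate_bilin (brHom m) ((CP m).ad f) _ _ (fun a b => jacobi f a b) r a b

lemma iterate_zero {M : Type*} [AddCommMonoid M] (T : M →+ M) (r : ℕ) : T^[r] 0 = 0 := by
  induction r with
  | zero => rfl
  | succ r ih => rw [Function.iterate_succ_apply', ih, map_zero]

lemma iterate_mul (f : PZ m) (r : ℕ) (a b : PZ m) :
    ((CP m).br f)^[r] (a * b) = ∑ ij ∈ Finset.HasAntidiagonal.antidiagonal r,
      r.choose ij.1 • (((CP m).br f)^[ij.1] a
        * (fun b => (CP m).br f b - (CP m).br f 1 * b)^[ij.2] b) :=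
  iterate_bilin (AddMonoidHom.mul) ((CP m).ad f) _
    (fun b => (CP m).br f b - (CP m).br f 1 * b)
    (fun a b => by simp only [AddMonoidHom.mul_apply, ad_apply, br_mul_right]; ring) r a b

end Integral

/-! ### Derivations along a reduction map are inner -/

section AdRep

variable {m : ℕ} {A : Type*} [CommRing A] (C : CData m A)

lemma br_fo (ρ : PZ m →+* A) (u : A) :
    IsFO ρ ((C.ad u).comp ρ.toAddMonoidHom) := by
  intro a b
  simp only [AddMonoidHom.comp_apply, RingHom.toAddMonoidHom_eq_coe, AddMonoidHom.coe_coe,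
    ad_apply, map_mul, map_one]
  rw [br_mul_right]

lemma sum_sgn_y_y (h2 : IsUnit (2 : A)) : ∑ i, sgn A i * (C.y (cj m i) * C.y i) = 0 := by
  have h : ∑ i, sgn A i * (C.y (cj m i) * C.y i) = - ∑ i, sgn A i * (C.y (cj m i) * C.y i) := by
    conv_lhs => rw [← sum_cj]
    rw [← Finset.sum_neg_distrib]
    exact Finset.sum_congr rfl fun i _ => by rw [sgn_cj, cj_cj]; ring
  refine (h2.mul_right_eq_zero).1 ?_
  linear_combination h

lemma sum_sgn_br (h2 : IsUnit (2 : A)) (g : A) :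
    ∑ i, sgn A i * (C.y (cj m i) * C.br (C.y i) g) = ∑ j, C.y j * C.dy j g := by
  have h := sum_sgn_y_y C h2
  have : ∀ i, sgn A i * (C.y (cj m i) * C.br (C.y i) g)
      = C.y (cj m i) * C.dy (cj m i) g + sgn A i * (C.y (cj m i) * C.y i) * C.dt g := by
    intro i
    rw [br_y_left]
    linear_combination (C.y (cj m i) * C.dy (cj m i) g) * sgn_mul_self (R := A) i
  rw [Finset.sum_congr rfl fun i _ => this i, Finset.sum_add_distrib, ← Finset.sum_mul, h,
    zero_mul, add_zero, sum_cj fun j => C.y j * C.dy j g]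

lemma br_y_mul (i : Fin (2 * m)) (a b : A) :
    C.br (C.y i) (a * b) = C.br (C.y i) a * b + a * C.br (C.y i) b := by
  rw [br_mul_right, br_y_one]; ring

lemma eu_sum {ι : Type*} (s : Finset ι) (f : ι → A) :
    C.eu (∑ i ∈ s, f i) = ∑ i ∈ s, C.eu (f i) :=
  map_sum (AddMonoidHom.mk' C.eu (eu_add C)) f s

lemma eu_sub (f g : A) : C.eu (f - g) = C.eu f - C.eu g :=
  map_sub (AddMonoidHom.mk' C.eu (eu_add C)) f g

lemma eu_sgn_mul (i : Fin (2 * m)) (g : A) : C.eu (sgn A i * g) = sgn A i * C.eu g := by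
  unfold sgn
  split_ifs
  · simp
  · have h0 := map_neg (AddMonoidHom.mk' C.eu (eu_add C)) g
    simpa using h0

lemma br_sgn_mul (i : Fin (2 * m)) (f g : A) : C.br f (sgn A i * g) = sgn A i * C.br f g := by
  unfold sgn
  split_ifs
  · simp
  · simp [br_neg_right]

/-- A first-order operator along `ρ` which is a derivation for the brackets is `ad v` for an
explicit `v`, built from its values at the generators `1, x_1, …, x_n`. -/
lemma ad_rep (ρ : PZ m →+* A)
    (hy : ∀ i, ρ ((CP m).y i) = C.y i) (ht : ρ (CP m).t = C.t) {h : A} (hh : 2 * h = 1)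
    (hc : ∀ f g, C.br (h * f) g = h * C.br f g)
    (D : PZ m →+ A) (hD : IsFO ρ D)
    (hL : ∀ a b, D ((CP m).br a b) = C.br (D a) (ρ b) + C.br (ρ a) (D b)) :
    ∃ v, ∀ y, D y = C.br v (ρ y) := by
  have h2 : IsUnit (2 : A) := IsUnit.of_mul_eq_one _ hh
  -- the relations obtained by applying `D` to the brackets of generators
  have D2 : D 2 = 2 * D 1 := by
    have : (2 : PZ m) = 1 + 1 := by norm_num
    rw [this, map_add]; ring
  have R1 : 2 * C.dt (D (CP m).t) = 2 * D 1 + (C.eu (D 1) - 2 * D 1) := by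
    have := hL 1 (CP m).t
    rw [br_one_t, D2, ρ.map_one, ht, br_one_left, br_swap, br_t_left] at this
    linear_combination - this
  have R2 (i) : 2 * C.dt (D ((CP m).y i)) = C.br (C.y i) (D 1) := by
    have := hL 1 ((CP m).y i)
    rw [br_one_y, map_zero, ρ.map_one, hy, br_one_left, br_swap] at this
    linear_combination - this
  have R3 (i j) : C.br (C.y i) (D ((CP m).y j)) = C.br (C.y j) (D ((CP m).y i))
      + (if i = cj m j then sgn A i else 0) * D 1 := by
    have := hL ((CP m).y i) ((CP m).y j)
    rw [hy, hy, br_y_y, br_swap C _ (C.y j)] at this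
    have h3 : D (if i = cj m j then sgn (PZ m) i else 0)
        = (if i = cj m j then sgn A i else 0) * D 1 := by
      unfold sgn
      split_ifs <;> simp
    rw [h3] at this
    linear_combination - this
  have R4 (i) : C.br (C.y i) (D (CP m).t)
      = D ((CP m).y i) + (C.eu (D ((CP m).y i)) - 2 * D ((CP m).y i)) := by
    have := hL ((CP m).y i) (CP m).t
    rw [br_y_t, hy, ht, br_swap C _ C.t, br_t_left] at this
    linear_combination - this
  set e := fun i => D ((CP m).y i) with he
  set S := ∑ i, sgn A i * (C.y (cj m i) * e i) with hS
  set u := D (CP m).t - S - C.t * D 1 with hu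
  have U1 : C.br u 1 = 2 * D 1 := by
    have hs : 2 * C.dt S = ∑ j, C.y j * C.dy j (D 1) := by
      rw [← sum_sgn_br C h2, hS, map_sum, Finset.mul_sum]
      refine Finset.sum_congr rfl fun i _ => ?_
      have hsg : C.dt (sgn A i) = 0 := by unfold sgn; split_ifs <;> simp
      rw [← R2]
      simp only [Derivation.leibniz, smul_eq_mul, hsg, dt_y]
      ring
    have h3 : 2 * C.dt u = - 2 * D 1 := by
      rw [hu, map_sub, map_sub, Derivation.leibniz, dt_t, mul_sub, mul_sub, R1, hs, CData.eu]
      simp only [smul_eq_mul]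
      ring
    rw [br_one_right]
    linear_combination - h3
  have Uy (k) : C.br u (C.y k) = 2 * e k := by
    have hs : C.br (C.y k) S = e k + ∑ j, C.y j * C.dy j (e k) - C.y k * D 1 := by
      have h4 : ∀ i, C.br (C.y k) (sgn A i * (C.y (cj m i) * e i))
          = (if k = i then e k else 0) + sgn A i * (C.y (cj m i) * C.br (C.y i) (e k))
            + (if cj m k = i then - (C.y k * D 1) else 0) := by
        intro i
        rw [br_sgn_mul, br_y_mul, R3 k i, br_y_y, cj_cj]
        have h5 : (cj m k = i) = (k = cj m i) := propext (cj_eq_iff k i)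
        simp only [h5]
        have hne : i ≠ cj m i := fun hc => cj_ne i hc.symm
        by_cases h6 : k = i
        · subst h6
          simp only [if_true, hne, if_false]
          linear_combination (e k) * sgn_mul_self (R := A) k
        · by_cases h7 : k = cj m i
          · subst h7
            simp only [if_true, h6, if_false, sgn_cj]
            linear_combination - (C.y (cj m i) * D 1) * sgn_mul_self (R := A) i
          · simp only [h6, h7, if_false]; ring
      rw [hS, br_sum_right, Finset.sum_congr rfl fun i _ => h4 i, Finset.sum_add_distrib,
        Finset.sum_add_distrib, sum_sgn_br C h2]
      simp
      ring
    rw [br_swap, hu, br_sub_right, br_sub_right, hs, R4, br_y_mul, br_y_t, ← R2, CData.eu]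
    ring
  have Ut : C.br u C.t = 2 * D (CP m).t := by
    have hs : C.eu S = ∑ j, C.y j * C.dy j (D (CP m).t) + 2 * S := by
      rw [hS, eu_sum, ← sum_sgn_br C h2, Finset.mul_sum, ← Finset.sum_add_distrib]
      refine Finset.sum_congr rfl fun i _ => ?_
      rw [eu_sgn_mul, eu_mul, eu_y, R4]
      ring
    rw [br_swap, br_t_left, hu, eu_sub, eu_sub, hs, eu_mul, eu_t, CData.eu, CData.eu]
    rw [CData.eu] at R1
    linear_combination - C.t * R1
  refine ⟨h * u, fun y => ?_⟩
  refine IsFO.ext hD (br_fo C ρ (h * u)) ?_ ?_ ?_ y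
  · change D 1 = C.br (h * u) (ρ 1)
    rw [ρ.map_one, hc, U1]; linear_combination - D 1 * hh
  · intro i
    change D _ = C.br (h * u) (ρ _)
    rw [hy, hc, Uy]; linear_combination - e i * hh
  · change D _ = C.br (h * u) (ρ _)
    rw [ht, hc, Ut]; linear_combination - D (CP m).t * hh

end AdRep

/-! ### The truncated algebra as a reduction of the integral polynomial ring -/

section Reduction

variable (F : Type*) [Field F] (p m : ℕ)

/-- The reduction map from integral polynomials to the truncated polynomial algebra. -/
def rho : PZ m →+* TruncP F p (2 * m + 1) :=
  (Ideal.Quotient.mk _).comp (MvPolynomial.map (Int.castRingHom F))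

lemma rho_X (j : Fin (2 * m + 1)) :
    rho F p m (MvPolynomial.X j) = xpow F p (2 * m + 1) (Pi.single j 1) := by
  rw [rho, RingHom.comp_apply, MvPolynomial.map_X, xpow, MvPolynomial.X]
  congr 3
  ext i
  by_cases h : i = j
  · subst h; simp
  · simp [h]

/-- The monomial `x^a` of the integral polynomial ring. -/
def mon {m : ℕ} (a : Fin (2 * m + 1) → ℕ) : PZ m :=
  MvPolynomial.monomial (Finsupp.equivFunOnFinite.symm a) 1

lemma rho_mon (a : Fin (2 * m + 1) → ℕ) : rho F p m (mon a) = xpow F p (2 * m + 1) a := by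
  rw [rho, RingHom.comp_apply, mon, MvPolynomial.map_monomial, xpow, map_one]

variable {F p m}

lemma coeffT_rho {c : Fin (2 * m + 1) → ℕ} (hc : ∀ i, c i < p) (g : PZ m) :
    coeffT F p (2 * m + 1) c (rho F p m g)
      = ((g.coeff (Finsupp.equivFunOnFinite.symm c) : ℤ) : F) := by
  rw [coeffT, dif_pos hc, rho, RingHom.comp_apply, liftF_mk]
  exact MvPolynomial.coeff_map (Int.castRingHom F) g _

lemma monomial_mem_trunc {s : Fin (2 * m + 1) →₀ ℕ} {i} (hi : p ≤ s i) (c : F) :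
    (Ideal.Quotient.mk (truncIdeal F p (2 * m + 1))) (MvPolynomial.monomial s c) = 0 := by
  rw [Ideal.Quotient.eq_zero_iff_mem]
  have : MvPolynomial.monomial s c
      = MvPolynomial.monomial (s - Finsupp.single i p) c * MvPolynomial.X (R := F) i ^ p := by
    rw [MvPolynomial.X_pow_eq_monomial, MvPolynomial.monomial_mul, mul_one, tsub_add_cancel_of_le]
    intro j
    by_cases h : i = j
    · subst h; simpa using hi
    · simp [h]
  rw [this]
  exact Ideal.mul_mem_left _ _ (Ideal.subset_span ⟨i, rfl⟩)

lemma eq_zero_of_coeffT {g : TruncP F p (2 * m + 1)}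
    (h : ∀ c, (∀ i, c i < p) → coeffT F p (2 * m + 1) c g = 0) : g = 0 := by
  obtain ⟨f, rfl⟩ := Ideal.Quotient.mk_surjective g
  rw [f.as_sum, map_sum]
  refine Finset.sum_eq_zero fun s _ => ?_
  by_cases hs : ∃ i, p ≤ s i
  · obtain ⟨i, hi⟩ := hs
    exact monomial_mem_trunc hi _
  · push Not at hs
    have := h s hs
    rw [coeffT, dif_pos hs, liftF_mk] at this
    have h2 : f.coeff s = 0 := by
      have h3 : Finsupp.equivFunOnFinite.symm (s : Fin (2 * m + 1) → ℕ) = s := by ext; rfl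
      rw [← h3]
      exact this
    rw [h2, map_zero, map_zero]

lemma rho_eq_zero {g : PZ m} (h : ∀ c : Fin (2 * m + 1) →₀ ℕ, (∀ i, c i < p) →
    ((g.coeff c : ℤ) : F) = 0) : rho F p m g = 0 := by
  refine eq_zero_of_coeffT fun c hc => ?_
  rw [coeffT_rho hc]
  exact h _ hc

lemma rho_add_induction {q : TruncP F p (2 * m + 1) → Prop}
    (hs : ∀ (c : F) (g : PZ m), q (c • rho F p m g)) (ha : ∀ a b, q a → q b → q (a + b))
    (a : TruncP F p (2 * m + 1)) : q a := by
  obtain ⟨f, rfl⟩ := Ideal.Quotient.mk_surjective a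
  induction f using MvPolynomial.induction_on' with
  | monomial s c =>
    have : (Ideal.Quotient.mk (truncIdeal F p (2 * m + 1))) (MvPolynomial.monomial s c)
        = c • rho F p m (mon s) := by
      rw [rho_mon, xpow, ← Ideal.Quotient.mkₐ_eq_mk F, ← map_smul, MvPolynomial.smul_monomial,
        smul_eq_mul, mul_one]
      have h3 : Finsupp.equivFunOnFinite.symm (s : Fin (2 * m + 1) → ℕ) = s := by ext; rfl
      rw [h3]
    rw [this]
    exact hs _ _
  | add f g hf hg => rw [map_add]; exact ha _ _ hf hg

lemma nsmul_inj {k : ℕ} (hk : ((k : ℕ) : F) ≠ 0) {a b : TruncP F p (2 * m + 1)}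
    (h : k • a = k • b) : a = b := by
  rw [← Nat.cast_smul_eq_nsmul F, ← Nat.cast_smul_eq_nsmul F k b] at h
  exact smul_right_injective _ hk h

variable (F p m)

lemma rho_sgn (i : Fin (2 * m)) : rho F p m (sgn _ i) = sgn _ i := by
  unfold sgn; split_ifs <;> simp

lemma rho_two : rho F p m 2 = 2 := map_ofNat (rho F p m) 2

variable [CharP F p]

/-- The partial derivatives of the truncated algebra as additive derivations. -/
def dA (j : Fin (2 * m + 1)) : CDer (TruncP F p (2 * m + 1)) :=
  Derivation.mk' (AddMonoidHom.toIntLinearMap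
      (Dj F p (2 * m + 1) j).toLinearMap.toAddMonoidHom)
    fun a b => (Dj F p (2 * m + 1) j).leibniz a b

lemma dA_apply (j : Fin (2 * m + 1)) (g : TruncP F p (2 * m + 1)) :
    dA F p m j g = Dj F p (2 * m + 1) j g := rfl

lemma dA_rho (j : Fin (2 * m + 1)) (g : PZ m) :
    dA F p m j (rho F p m g) = rho F p m (dP j g) := by
  rw [dA_apply, rho, RingHom.comp_apply, RingHom.comp_apply, dP_apply, ← MvPolynomial.pderiv_map]
  exact DjL_mk F p _ j _

lemma dA_smul (j : Fin (2 * m + 1)) (c : F) (g : TruncP F p (2 * m + 1)) :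
    dA F p m j (c • g) = c • dA F p m j g := by
  exact (Dj F p (2 * m + 1) j).toLinearMap.map_smul c g

/-- The contact structure of the truncated polynomial algebra. -/
def CA : CData m (TruncP F p (2 * m + 1)) where
  d := dA F p m
  x j := xpow F p (2 * m + 1) (Pi.single j 1)
  d_x j k := by
    have := (CP m).d_x j k
    change dP j (MvPolynomial.X k) = _ at this
    rw [← rho_X, dA_rho, this]
    split_ifs <;> simp
  d_comm i j a := by
    refine rho_add_induction (q := fun a => dA F p m i (dA F p m j a) = dA F p m j (dA F p m i a))
      (fun c g => ?_) (fun a b ha hb => ?_) a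
    · have := (CP m).d_comm i j g
      change dP i (dP j g) = dP j (dP i g) at this
      simp only [dA_smul, dA_rho, this]
    · simp only [map_add, ha, hb]

lemma rho_y (i : Fin (2 * m)) : rho F p m ((CP m).y i) = (CA F p m).y i := rho_X F p m _
lemma rho_t : rho F p m (CP m).t = (CA F p m).t := rho_X F p m _
lemma dy_rho (i : Fin (2 * m)) (g : PZ m) :
    (CA F p m).dy i (rho F p m g) = rho F p m ((CP m).dy i g) := dA_rho F p m _ g
lemma dt_rho (g : PZ m) : (CA F p m).dt (rho F p m g) = rho F p m ((CP m).dt g) :=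
  dA_rho F p m _ g

lemma rho_eu (g : PZ m) : rho F p m ((CP m).eu g) = (CA F p m).eu (rho F p m g) := by
  simp [CData.eu, rho_two, rho_y, rho_t, dy_rho, dt_rho]

lemma rho_br (f g : PZ m) :
    rho F p m ((CP m).br f g) = (CA F p m).br (rho F p m f) (rho F p m g) := by
  simp [CData.br, CData.po, rho_two, rho_eu, dy_rho, dt_rho, rho_sgn]

lemma sg_smul (i : Fin (2 * m)) (g : TruncP F p (2 * m + 1)) : sg F m i • g = sgn _ i * g := by
  unfold sg sgn
  split_ifs
  · rw [one_smul, one_mul]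
  · rw [neg_smul, one_smul]
    exact (neg_one_mul g).symm

lemma Kbr_eq (f g : TruncP F p (2 * m + 1)) : Kbr F p m f g = (CA F p m).br f g := by
  simp only [Kbr, DHK, sg_smul, EulK, CData.br, CData.po, CData.eu]
  rfl

lemma eu_smul (c : F) (g : TruncP F p (2 * m + 1)) :
    (CA F p m).eu (c • g) = c • (CA F p m).eu g := by
  have h1 : ∀ i, (CA F p m).dy i (c • g) = c • (CA F p m).dy i g := fun i => dA_smul F p m _ c g
  have h2 : (CA F p m).dt (c • g) = c • (CA F p m).dt g := dA_smul F p m _ c g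
  simp only [CData.eu, h1, h2, smul_add, mul_smul_comm, Finset.smul_sum]

lemma br_smul_right (c : F) (f g : TruncP F p (2 * m + 1)) :
    (CA F p m).br f (c • g) = c • (CA F p m).br f g := by
  have h1 : ∀ i, (CA F p m).dy i (c • g) = c • (CA F p m).dy i g := fun i => dA_smul F p m _ c g
  have h2 : (CA F p m).dt (c • g) = c • (CA F p m).dt g := dA_smul F p m _ c g
  simp only [CData.br, CData.po, h1, h2, eu_smul, smul_add, smul_sub, mul_smul_comm,
    smul_mul_assoc, Finset.smul_sum, mul_sub]

lemma br_smul_left (c : F) (f g : TruncP F p (2 * m + 1)) :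
    (CA F p m).br (c • f) g = c • (CA F p m).br f g := by
  rw [br_swap, br_smul_right, ← smul_neg, ← br_swap]

lemma char_smul (g : TruncP F p (2 * m + 1)) : p • g = 0 := by
  rw [← Nat.cast_smul_eq_nsmul F, CharP.cast_eq_zero, zero_smul]

lemma rho_char (g : PZ m) : rho F p m (p • g) = 0 := by rw [map_nsmul, char_smul]

/-- Additive maps along `rho` which are first order and derivations of the brackets are inner. -/
lemma ad_rep_rho (hp2 : 2 < p) (D : PZ m →+ TruncP F p (2 * m + 1)) (hD : IsFO (rho F p m) D)
    (hL : ∀ a b, D ((CP m).br a b)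
      = (CA F p m).br (D a) (rho F p m b) + (CA F p m).br (rho F p m a) (D b)) :
    ∃ v, ∀ y, D y = (CA F p m).br v (rho F p m y) := by
  have h2 : (2 : F) ≠ 0 := by
    intro h
    have h' : ((2 : ℕ) : F) = 0 := by exact_mod_cast h
    rw [CharP.cast_eq_zero_iff F p] at h'
    exact absurd (Nat.le_of_dvd (by norm_num) h') (by omega)
  have halg : ∀ g : TruncP F p (2 * m + 1), algebraMap F _ (2⁻¹ : F) * g = (2⁻¹ : F) • g :=
    fun g => (Algebra.smul_def _ _).symm
  refine ad_rep (CA F p m) (rho F p m) (rho_y F p m) (rho_t F p m)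
    (h := algebraMap F _ (2⁻¹ : F)) ?_ ?_ D hD hL
  · have h3 : (2 : TruncP F p (2 * m + 1)) = algebraMap F _ 2 :=
      (map_ofNat (algebraMap F (TruncP F p (2 * m + 1))) 2).symm
    rw [h3, ← map_mul, mul_inv_cancel₀ h2, map_one]
  · intro f g
    rw [halg, halg, br_smul_left]

end Reduction

/-! ### Divided powers of `ad z` on the integral form -/

section DividedPowers

variable {m : ℕ}

/-- The iterates of `ad f` as additive maps. -/
def CData.itr {R : Type*} [CommRing R] (C : CData m R) (f : R) (r : ℕ) : R →+ R :=
  AddMonoidHom.mk' ((C.br f)^[r]) fun a b => iterate_map_add (C.ad f) r a b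

lemma itr_apply {R : Type*} [CommRing R] (C : CData m R) (f : R) (r : ℕ) (g : R) :
    C.itr f r g = (C.br f)^[r] g := rfl

lemma choose_factorial {r : ℕ} {ij : ℕ × ℕ} (h : ij.1 + ij.2 = r) :
    r.choose ij.1 * (ij.1.factorial * ij.2.factorial) = r.factorial := by
  rw [← h, Nat.choose_symm_add, ← mul_assoc]
  exact Nat.add_choose_mul_factorial_mul_factorial _ _

/-- The condition on `z` under which the divided powers of `ad z` preserve the integral form:
`ad z` is a derivation of the product and its square kills the variables. -/
structure DPow (z : PZ m) : Prop where
  one : (CP m).br z 1 = 0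
  sq : ∀ k, (CP m).br z ((CP m).br z (MvPolynomial.X k)) = 0

variable {z : PZ m} (hz : DPow z)

lemma DPow.iterate_mul {z : PZ m} (hz : DPow z) (r : ℕ) (a b : PZ m) :
    ((CP m).br z)^[r] (a * b) = ∑ ij ∈ Finset.HasAntidiagonal.antidiagonal r,
      r.choose ij.1 • (((CP m).br z)^[ij.1] a * ((CP m).br z)^[ij.2] b) :=
  iterate_bilin (AddMonoidHom.mul) ((CP m).ad z) _ _
    (fun a b => by simp only [AddMonoidHom.mul_apply, ad_apply, br_mul_right, hz.one]; ring) r a b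

lemma DPow.iterate_one {z : PZ m} (hz : DPow z) {r : ℕ} (hr : 1 ≤ r) : ((CP m).br z)^[r] 1 = 0 := by
  obtain ⟨k, rfl⟩ := Nat.exists_eq_add_of_le' hr
  rw [Function.iterate_succ_apply, hz.one]
  exact iterate_zero ((CP m).ad z) k

lemma DPow.iterate_X {z : PZ m} (hz : DPow z) {r : ℕ} (hr : 2 ≤ r) (k) : ((CP m).br z)^[r] (MvPolynomial.X k) = 0 := by
  obtain ⟨s, rfl⟩ := Nat.exists_eq_add_of_le' hr
  rw [Function.iterate_add_apply]
  change ((CP m).br z)^[s] ((CP m).br z ((CP m).br z (MvPolynomial.X k))) = 0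
  rw [hz.sq]
  exact iterate_zero ((CP m).ad z) s

/-- Divisibility by `r!` holds on the variables, where `(ad z)^2 = 0`, and passes to products by the
Leibniz rule. -/
lemma DPow.dvd {z : PZ m} (hz : DPow z) (g : PZ m) : ∀ r : ℕ, ∃ h, ((CP m).br z)^[r] g = r.factorial • h := by
  induction g using MvPolynomial.induction_on with
  | C a =>
    intro r
    rcases Nat.eq_zero_or_pos r with rfl | hr
    · exact ⟨_, (one_smul _ _).symm⟩
    · refine ⟨0, ?_⟩
      have h1 : (MvPolynomial.C a : PZ m) = a • 1 := by simp
      rw [h1, smul_zero, ← itr_apply, map_zsmul, itr_apply, hz.iterate_one hr, smul_zero]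
  | add f g hf hg =>
    intro r
    obtain ⟨u, hu⟩ := hf r
    obtain ⟨v, hv⟩ := hg r
    refine ⟨u + v, ?_⟩
    rw [smul_add, ← hu, ← hv]
    exact map_add ((CP m).itr z r) f g
  | mul_X f k hf =>
    intro r
    have hX : ∀ j : ℕ, ∃ h, ((CP m).br z)^[j] (MvPolynomial.X k : PZ m) = j.factorial • h := by
      intro j
      rcases lt_or_ge j 2 with hj | hj
      · refine ⟨((CP m).br z)^[j] (MvPolynomial.X k), ?_⟩
        interval_cases j <;> simp
      · exact ⟨0, by rw [hz.iterate_X hj, smul_zero]⟩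
    choose u hu using hf
    choose v hv using hX
    refine ⟨∑ ij ∈ Finset.HasAntidiagonal.antidiagonal r, u ij.1 * v ij.2, ?_⟩
    rw [hz.iterate_mul, Finset.smul_sum]
    refine Finset.sum_congr rfl fun ij hij => ?_
    rw [Finset.HasAntidiagonal.mem_antidiagonal] at hij
    rw [hu, hv, smul_mul_smul_comm, smul_smul,
      choose_factorial hij]

/-- The divided power `(ad z)^r / r!` on integral polynomials. -/
def dpow (r : ℕ) : PZ m →+ PZ m :=
  AddMonoidHom.mk' (fun g => Classical.choose (hz.dvd g r)) fun a b => by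
    refine nsmul_cancel r.factorial_ne_zero ?_
    rw [smul_add, ← Classical.choose_spec (hz.dvd _ r), ← Classical.choose_spec (hz.dvd _ r),
      ← Classical.choose_spec (hz.dvd _ r)]
    exact map_add ((CP m).itr z r) a b

lemma dpow_spec (r : ℕ) (g : PZ m) : r.factorial • dpow hz r g = ((CP m).br z)^[r] g :=
  (Classical.choose_spec (hz.dvd g r)).symm

lemma dpow_zero (g : PZ m) : dpow hz 0 g = g := by
  have := dpow_spec hz 0 g
  simpa using this

lemma dpow_mul (r : ℕ) (a b : PZ m) :
    dpow hz r (a * b)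
      = ∑ ij ∈ Finset.HasAntidiagonal.antidiagonal r, dpow hz ij.1 a * dpow hz ij.2 b := by
  refine nsmul_cancel r.factorial_ne_zero ?_
  rw [dpow_spec, hz.iterate_mul, Finset.smul_sum]
  refine Finset.sum_congr rfl fun ij hij => ?_
  rw [Finset.HasAntidiagonal.mem_antidiagonal] at hij
  rw [← dpow_spec hz, ← dpow_spec hz, smul_mul_smul_comm, smul_smul,
    choose_factorial hij]

lemma dpow_br (r : ℕ) (a b : PZ m) :
    dpow hz r ((CP m).br a b)
      = ∑ ij ∈ Finset.HasAntidiagonal.antidiagonal r, (CP m).br (dpow hz ij.1 a) (dpow hz ij.2 b) := by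
  refine nsmul_cancel r.factorial_ne_zero ?_
  rw [dpow_spec, iterate_br, Finset.smul_sum]
  refine Finset.sum_congr rfl fun ij hij => ?_
  rw [Finset.HasAntidiagonal.mem_antidiagonal] at hij
  rw [← dpow_spec hz, ← dpow_spec hz, br_nsmul_left, br_nsmul_right, smul_smul, smul_smul,
    mul_assoc, choose_factorial hij]

lemma dpow_eq_zero {r : ℕ} {g : PZ m} (h : ((CP m).br z)^[r] g = 0) : dpow hz r g = 0 := by
  refine nsmul_cancel r.factorial_ne_zero ?_
  rw [dpow_spec, h, smul_zero]

lemma dpow_one {r : ℕ} (hr : 1 ≤ r) : dpow hz r 1 = 0 := dpow_eq_zero hz (hz.iterate_one hr)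

lemma dpow_X {r : ℕ} (hr : 2 ≤ r) (k) : dpow hz r (MvPolynomial.X k) = 0 :=
  dpow_eq_zero hz (hz.iterate_X hr k)

end DividedPowers

section Squaring

lemma sum_antidiag_peel {M : Type*} [AddCommMonoid M] {q : ℕ} (hq : 0 < q) (f : ℕ → ℕ → M) :
    ∑ ij ∈ Finset.HasAntidiagonal.antidiagonal q, f ij.1 ij.2
      = f 0 q + f q 0 + ∑ i ∈ Finset.Ioo 0 q, f i (q - i) := by
  rw [Finset.Nat.sum_antidiagonal_eq_sum_range_succ_mk, Finset.sum_range_succ]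
  have : Finset.range q = insert 0 (Finset.Ioo 0 q) := by
    ext i; simp; omega
  rw [this, Finset.sum_insert (by simp), tsub_self, tsub_zero]
  exact add_right_comm _ _ _

variable {F : Type*} [Field F] {p m : ℕ} [CharP F p] {z : PZ m} (hz : DPow z)

lemma rho_iterate (f : PZ m) (r : ℕ) (g : PZ m) : rho F p m (((CP m).br f)^[r] g)
    = ((CA F p m).br (rho F p m f))^[r] (rho F p m g) := by
  induction r generalizing g with
  | zero => rfl
  | succ r ih => rw [Function.iterate_succ_apply, Function.iterate_succ_apply, ih, rho_br]

lemma factorial_ne (hp : p.Prime) {i : ℕ} (hi : i < p) : ((i.factorial : ℕ) : F) ≠ 0 := by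
  rw [Ne, CharP.cast_eq_zero_iff F p, hp.dvd_factorial]; omega

/-- Below `p` the divided powers of `ad z` preserve the kernel of the reduction, the factorials being
invertible there; `(ad z)^p / p!` does not. -/
lemma rho_dpow_ker {z : PZ m} (hz : DPow z) (hp : p.Prime) {i : ℕ} (hi : i < p) {u : PZ m} (hu : rho F p m u = 0) :
    rho F p m (dpow hz i u) = 0 := by
  refine nsmul_inj (factorial_ne hp hi) ?_
  rw [← map_nsmul, dpow_spec, rho_iterate, hu, smul_zero]
  exact iterate_zero ((CA F p m).ad (rho F p m z)) i

lemma rho_dpow_mul_ker (hp : p.Prime) {u : PZ m} (hu : rho F p m u = 0) (v : PZ m) :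
    rho F p m (dpow hz p (u * v)) = rho F p m (dpow hz p u) * rho F p m v := by
  rw [dpow_mul, sum_antidiag_peel hp.pos fun i j => dpow hz i u * dpow hz j v, map_add, map_add,
    map_sum, dpow_zero, dpow_zero, map_mul, map_mul, hu, zero_mul, zero_add,
    Finset.sum_eq_zero, add_zero]
  intro i hi
  rw [map_mul, rho_dpow_ker hz hp (Finset.mem_Ioo.1 hi).2 hu, zero_mul]

lemma rho_dpow_br_ker (hp : p.Prime) {u : PZ m} (hu : rho F p m u = 0) (v : PZ m) :
    rho F p m (dpow hz p ((CP m).br u v)) = (CA F p m).br (rho F p m (dpow hz p u)) (rho F p m v) := by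
  rw [dpow_br, sum_antidiag_peel hp.pos fun i j => (CP m).br (dpow hz i u) (dpow hz j v), map_add,
    map_add, map_sum, dpow_zero, dpow_zero, rho_br, rho_br, hu, br_zero_left, zero_add,
    Finset.sum_eq_zero, add_zero]
  intro i hi
  rw [rho_br, rho_dpow_ker hz hp (Finset.mem_Ioo.1 hi).2 hu, br_zero_left]

/-- The squaring of `ad z` is the reduction of the integral coboundary of `(ad z)^p / p!`. -/
lemma SqE_rho (hp : p.Prime) (x y : PZ m) :
    SqE F p (Kbr F p m) (rho F p m z) (rho F p m x) (rho F p m y)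
      = rho F p m (dpow hz p ((CP m).br x y) - (CP m).br (dpow hz p x) y
          - (CP m).br x (dpow hz p y)) := by
  have hK : Kbr F p m = (CA F p m).br := by
    funext f g; exact Kbr_eq F p m f g
  have h1 : dpow hz p ((CP m).br x y) - (CP m).br (dpow hz p x) y - (CP m).br x (dpow hz p y)
      = ∑ i ∈ Finset.Ioo 0 p, (CP m).br (dpow hz i x) (dpow hz (p - i) y) := by
    rw [dpow_br, sum_antidiag_peel hp.pos fun i j => (CP m).br (dpow hz i x) (dpow hz j y),
      dpow_zero, dpow_zero]
    abel
  rw [h1, map_sum, SqE, Squaring, hK]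
  refine Finset.sum_congr rfl fun i hi => ?_
  rw [Finset.mem_Ioo] at hi
  have hne : ((i.factorial * (p - i).factorial : ℕ) : F) ≠ 0 := by
    rw [Nat.cast_mul]
    exact mul_ne_zero (factorial_ne hp hi.2) (factorial_ne hp (by omega))
  change (_ : F) • (CA F p m).br (((CA F p m).br (rho F p m z))^[i] _)
    (((CA F p m).br (rho F p m z))^[p - i] _) = _
  rw [← rho_iterate, ← rho_iterate, ← rho_br, ← dpow_spec hz, ← dpow_spec hz, br_nsmul_left,
    br_nsmul_right, smul_smul, map_nsmul, ← Nat.cast_smul_eq_nsmul F, smul_smul,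
    inv_mul_cancel₀ hne, one_smul]

end Squaring

/-! ### The Hochschild operator of the squaring of `ad z` -/

section Hochschild

variable {m : ℕ}

/-- The operator `(ad f)^p - ad g`; it vanishes modulo `p` and the `p`-th powers of the variables
exactly when `g` is a `p`-th power of `f`. -/
def pT (p : ℕ) (f g : PZ m) : PZ m →+ PZ m := (CP m).itr f p - (CP m).ad g

lemma pT_apply (p : ℕ) (f g y : PZ m) : pT p f g y = ((CP m).br f)^[p] y - (CP m).br g y := rfl

/-- Modulo `p`, `(ad f)^p - ad g` is a first-order operator, by the Leibniz rule. -/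
lemma pT_mul {p : ℕ} (hp : p.Prime) (f g a b : PZ m) : ∃ h,
    pT p f g (a * b) = pT p f g a * b + pT p f g b * a - pT p f g 1 * (a * b) + p • h := by
  have key : ∀ a b : PZ m, ∃ h, ((CP m).br f)^[p] (a * b) = ((CP m).br f)^[p] a * b
      + a * (fun b => (CP m).br f b - (CP m).br f 1 * b)^[p] b + p • h := by
    intro a b
    obtain ⟨h, hh⟩ := sum_choose_prime hp fun i j =>
      ((CP m).br f)^[i] a * (fun b => (CP m).br f b - (CP m).br f 1 * b)^[j] b
    exact ⟨h, by rw [iterate_mul, hh]; rfl⟩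
  obtain ⟨h1, e1⟩ := key a b
  obtain ⟨h2, e2⟩ := key 1 b
  refine ⟨h1 - a * h2, ?_⟩
  rw [one_mul, one_mul] at e2
  simp only [pT_apply, br_mul_right, e1]
  rw [nsmul_eq_mul] at e2 ⊢
  rw [nsmul_eq_mul]
  linear_combination - a * e2

/-- Modulo `p`, `(ad f)^p - ad g` is a derivation of the bracket. -/
lemma pT_br {p : ℕ} (hp : p.Prime) (f g a b : PZ m) : ∃ h,
    pT p f g ((CP m).br a b) = (CP m).br (pT p f g a) b - (CP m).br (pT p f g b) a + p • h := by
  obtain ⟨h, hh⟩ := sum_choose_prime hp fun i j =>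
    (CP m).br (((CP m).br f)^[i] a) (((CP m).br f)^[j] b)
  refine ⟨h, ?_⟩
  rw [pT_apply, iterate_br, hh, jacobi, pT_apply, pT_apply, br_sub_left, br_sub_left,
    br_swap _ (((CP m).br f)^[p] b) a, br_swap _ ((CP m).br g b) a]
  simp only [Function.iterate_zero, id]
  ring

lemma sum_range_choose_eq (n i : ℕ) : ∑ j ∈ Finset.range n, j.choose i = n.choose (i + 1) := by
  induction n with
  | zero => simp
  | succ n ih => rw [Finset.sum_range_succ, ih, Nat.choose_succ_succ, add_comm]

lemma sum_iterate_br (f b y : PZ m) (n : ℕ) :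
    ∑ j ∈ Finset.range n, ((CP m).br f)^[j] ((CP m).br b (((CP m).br f)^[n - 1 - j] y))
      = ∑ i ∈ Finset.range n, n.choose (i + 1) •
          (CP m).br (((CP m).br f)^[i] b) (((CP m).br f)^[n - 1 - i] y) := by
  have h : ∀ j ∈ Finset.range n,
      ((CP m).br f)^[j] ((CP m).br b (((CP m).br f)^[n - 1 - j] y))
        = ∑ i ∈ Finset.range n, j.choose i •
          (CP m).br (((CP m).br f)^[i] b) (((CP m).br f)^[n - 1 - i] y) := by
    intro j hj
    rw [Finset.mem_range] at hj
    rw [iterate_br, Finset.Nat.sum_antidiagonal_eq_sum_range_succ_mk]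
    refine (Finset.sum_congr rfl fun i hi => ?_).trans
      (Finset.sum_subset (Finset.range_subset_range.2 hj) fun i _ hi => ?_)
    · rw [Finset.mem_range] at hi
      rw [← Function.iterate_add_apply]
      congr 4
      omega
    · rw [Finset.mem_range] at hi
      rw [Nat.choose_eq_zero_of_lt (by omega), zero_smul]
  rw [Finset.sum_congr rfl h, Finset.sum_comm]
  exact Finset.sum_congr rfl fun i _ => by rw [← Finset.sum_smul, sum_range_choose_eq]

/-- Modulo `p`, `∑_j (ad f)^j ∘ ad b ∘ (ad f)^{p-1-j} = ad ((ad f)^{p-1} b)`. -/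
lemma sum_iterate_br_prime {p : ℕ} (hp : p.Prime) (f b y : PZ m) : ∃ h,
    ∑ j ∈ Finset.range p, ((CP m).br f)^[j] ((CP m).br b (((CP m).br f)^[p - 1 - j] y))
      = (CP m).br (((CP m).br f)^[p - 1] b) y + p • h := by
  obtain ⟨k, rfl⟩ : ∃ k, p = k + 1 := ⟨p - 1, by have := hp.pos; omega⟩
  refine ⟨∑ i ∈ Finset.range k, ((k + 1).choose (i + 1) / (k + 1)) •
          (CP m).br (((CP m).br f)^[i] b) (((CP m).br f)^[k - i] y), ?_⟩
  rw [sum_iterate_br, Finset.sum_range_succ, Nat.choose_self, one_smul, Finset.smul_sum, add_comm]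
  simp only [Nat.add_sub_cancel, tsub_self, Function.iterate_zero, id]
  congr 1
  refine Finset.sum_congr rfl fun i hi => ?_
  rw [Finset.mem_range] at hi
  rw [smul_smul, Nat.mul_div_cancel' (hp.dvd_choose_self (by omega) (by omega))]

variable {z : PZ m} (hz : DPow z) {F : Type*} [Field F] {p : ℕ} [CharP F p]

/-- If `g` is a `p`-th power of `f`, then `y ↦ φ (((ad f)^p - ad g) y)`, with `φ = (ad z)^p / p!`,
reduces to an inner derivation. -/
lemma exists_ad_dpow_pT (hp : p.Prime) (hp2 : 2 < p) {f g : PZ m}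
    (hT : ∀ y, rho F p m (pT p f g y) = 0) :
    ∃ w, ∀ y, rho F p m (dpow hz p (pT p f g y)) = (CA F p m).br w (rho F p m y) := by
  refine ad_rep_rho F p m hp2
    ((rho F p m).toAddMonoidHom.comp ((dpow hz p).comp (pT p f g))) ?_ ?_
  · intro a b
    change rho F p m (dpow hz p (pT p f g (a * b))) = rho F p m (dpow hz p (pT p f g a)) * rho F p m b
      + rho F p m a * rho F p m (dpow hz p (pT p f g b))
      - rho F p m (dpow hz p (pT p f g 1)) * (rho F p m a * rho F p m b)
    obtain ⟨h, e⟩ := pT_mul hp f g a b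
    rw [e, map_add, map_sub, map_add, map_nsmul, map_add, map_sub, map_add, rho_char, add_zero,
      rho_dpow_mul_ker hz hp (hT a), rho_dpow_mul_ker hz hp (hT b), rho_dpow_mul_ker hz hp (hT 1),
      map_mul]
    ring
  · intro a b
    change rho F p m (dpow hz p (pT p f g ((CP m).br a b)))
      = (CA F p m).br (rho F p m (dpow hz p (pT p f g a))) (rho F p m b)
        + (CA F p m).br (rho F p m a) (rho F p m (dpow hz p (pT p f g b)))
    obtain ⟨h, e⟩ := pT_br hp f g a b
    rw [e, map_add, map_sub, map_nsmul, map_add, map_sub, rho_char, add_zero,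
      rho_dpow_br_ker hz hp (hT a), rho_dpow_br_ker hz hp (hT b),
      br_swap _ (rho F p m (dpow hz p (pT p f g b)))]
    ring

lemma iterate_smul (v : TruncP F p (2 * m + 1)) (r : ℕ) (c : F) (a : TruncP F p (2 * m + 1)) :
    ((CA F p m).br v)^[r] (c • a) = c • ((CA F p m).br v)^[r] a := by
  induction r with
  | zero => rfl
  | succ r ih =>
    rw [Function.iterate_succ_apply', ih, br_smul_right,
      Function.iterate_succ_apply' ((CA F p m).br v)]

/-- To identify the Hochschild operator of a cochain which is `F`-linear in its last argument with an
inner derivation, it suffices to compare them on reductions of integral elements. -/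
lemma HOp_eq_of_rho {ψ : TruncP F p (2 * m + 1) → TruncP F p (2 * m + 1) → TruncP F p (2 * m + 1)}
    (hadd : ∀ x a b, ψ x (a + b) = ψ x a + ψ x b) (hsm : ∀ x (c : F) a, ψ x (c • a) = c • ψ x a)
    (x xp v : TruncP F p (2 * m + 1))
    (h : ∀ y, HOp p (CA F p m).br ψ x xp (rho F p m y) = (CA F p m).br v (rho F p m y))
    (y : TruncP F p (2 * m + 1)) :
    HOp p (CA F p m).br ψ x xp y = (CA F p m).br v y := by
  have iadd : ∀ r a b, ((CA F p m).br x)^[r] (a + b)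
      = ((CA F p m).br x)^[r] a + ((CA F p m).br x)^[r] b := fun r => map_add ((CA F p m).itr x r)
  refine rho_add_induction
    (q := fun y => HOp p (CA F p m).br ψ x xp y = (CA F p m).br v y) ?_ ?_ y
  · intro c g
    rw [br_smul_right, ← h]
    simp only [HOp, hsm, smul_sub, Finset.smul_sum]
    congr 1
    refine Finset.sum_congr rfl fun j _ => ?_
    change ((CA F p m).br x)^[j] (ψ x (((CA F p m).br x)^[p - 1 - j] (c • rho F p m g))) = _
    rw [iterate_smul, hsm, iterate_smul]
  · intro a b ha hb
    rw [br_add_right, ← ha, ← hb]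
    simp only [HOp, hadd]
    have : ∀ j, ((CA F p m).br x)^[j] (ψ x (((CA F p m).br x)^[p - 1 - j] (a + b)))
        = ((CA F p m).br x)^[j] (ψ x (((CA F p m).br x)^[p - 1 - j] a))
          + ((CA F p m).br x)^[j] (ψ x (((CA F p m).br x)^[p - 1 - j] b)) := by
      intro j; rw [iadd, hadd, iadd]
    have h2 := Finset.sum_congr (rfl : Finset.range p = Finset.range p) fun j _ => this j
    rw [Finset.sum_add_distrib] at h2
    exact (congrArg (· - (ψ xp a + ψ xp b)) h2).trans (by abel)

/-- The Hochschild operator of `Sq(z)` is `ad` of an explicit element. -/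
lemma HOp_SqE (hp : p.Prime) {f g : PZ m} (hT : ∀ y, rho F p m (pT p f g y) = 0)
    {w : TruncP F p (2 * m + 1)}
    (hw : ∀ y, rho F p m (dpow hz p (pT p f g y)) = (CA F p m).br w (rho F p m y))
    (Y : TruncP F p (2 * m + 1)) :
    HOp p (Kbr F p m) (SqE F p (Kbr F p m) (rho F p m z)) (rho F p m f) (rho F p m g) Y
      = Kbr F p m (w - (rho F p m (((CP m).br f)^[p - 1] (dpow hz p f)) - rho F p m (dpow hz p g)))
        Y := by
  have hK : Kbr F p m = (CA F p m).br := by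
    funext f g; exact Kbr_eq F p m f g
  have iadd : ∀ v r a b, ((CA F p m).br v)^[r] (a + b)
      = ((CA F p m).br v)^[r] a + ((CA F p m).br v)^[r] b := fun v r => map_add ((CA F p m).itr v r)
  have hψ := SqE_rho hz (F := F) hp
  rw [hK] at hψ ⊢
  refine HOp_eq_of_rho ?_ ?_ _ _ _ (fun y => ?_) Y
  · intro x a b
    simp only [SqE, Squaring, ← Finset.sum_add_distrib, ← smul_add, ← br_add_right]
    exact Finset.sum_congr rfl fun i _ => by
      congr 2
      exact iadd _ _ _ _
  · intro x c a
    simp only [SqE, Squaring, Finset.smul_sum, smul_comm c, ← br_smul_right]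
    exact Finset.sum_congr rfl fun i _ => by
      congr 2
      exact iterate_smul _ _ _ _
  · set φ := dpow hz p with hφ
    set S := (CP m).br f with hS
    obtain ⟨h, e⟩ := sum_iterate_br_prime hp f (φ f) y
    have h1 : ∑ j ∈ Finset.range p, S^[j] (φ (S (S^[p - 1 - j] y)) - (CP m).br (φ f) (S^[p - 1 - j] y)
        - S (φ (S^[p - 1 - j] y)))
        = φ (S^[p] y) - S^[p] (φ y) - ((CP m).br (S^[p - 1] (φ f)) y + p • h) := by
      have h2 : ∀ j ∈ Finset.range p,
          S^[j] (φ (S (S^[p - 1 - j] y)) - (CP m).br (φ f) (S^[p - 1 - j] y) - S (φ (S^[p - 1 - j] y)))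
          = (S^[j] (φ (S^[p - j] y)) - S^[j + 1] (φ (S^[p - (j + 1)] y)))
            - S^[j] ((CP m).br (φ f) (S^[p - 1 - j] y)) := by
        intro j hj
        rw [Finset.mem_range] at hj
        have h3 : ∀ a b, S^[j] (a - b) = S^[j] a - S^[j] b := map_sub ((CP m).itr f j)
        have h4 : p - j = (p - 1 - j) + 1 := by omega
        have h5 : p - (j + 1) = p - 1 - j := by omega
        rw [h3, h3, h4, h5, Function.iterate_succ_apply', Function.iterate_succ_apply]
        abel
      rw [Finset.sum_congr rfl h2, Finset.sum_sub_distrib, e,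
        Finset.sum_range_sub' fun j => S^[j] (φ (S^[p - j] y))]
      simp [hS]
    have h6 : HOp p (CA F p m).br (SqE F p (CA F p m).br (rho F p m z)) (rho F p m f)
        (rho F p m g) (rho F p m y)
        = rho F p m (∑ j ∈ Finset.range p, S^[j] (φ (S (S^[p - 1 - j] y))
            - (CP m).br (φ f) (S^[p - 1 - j] y) - S (φ (S^[p - 1 - j] y)))
          - (φ ((CP m).br g y) - (CP m).br (φ g) y - (CP m).br g (φ y))) := by
      rw [map_sub, map_sum, ← hψ, HOp]
      congr 1
      refine Finset.sum_congr rfl fun j _ => ?_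
      rw [rho_iterate, ← hψ, rho_iterate]
    rw [h6, h1, br_sub_left, br_sub_left, ← hw, ← rho_br, ← rho_br, ← map_sub, ← map_sub,
      ← sub_eq_zero, ← map_sub]
    have h7 : φ (S^[p] y) - S^[p] (φ y) - ((CP m).br (S^[p - 1] (φ f)) y + p • h)
        - (φ ((CP m).br g y) - (CP m).br (φ g) y - (CP m).br g (φ y))
        - (φ (pT p f g y) - ((CP m).br (S^[p - 1] (φ f)) y - (CP m).br (φ g) y))
        = - pT p f g (φ y) - p • h := by
      rw [pT_apply, pT_apply, map_sub]
      ring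
    rw [h7, map_sub, map_neg, hT, rho_char]
    simp

end Hochschild

/-! ### Weights -/

section Weights

variable {m : ℕ} {R : Type*} [CommRing R] (C : CData m R)

/-- The operator `x_k D_k`, whose eigenvectors are the weight vectors. -/
def CData.nop (k : Fin (2 * m + 1)) (g : R) : R := C.x k * C.d k g

lemma nop_add (k) (f g : R) : C.nop k (f + g) = C.nop k f + C.nop k g := by
  simp [CData.nop, mul_add]

lemma nop_sub (k) (f g : R) : C.nop k (f - g) = C.nop k f - C.nop k g := by
  simp [CData.nop, mul_sub]

lemma nop_mul (k) (f g : R) : C.nop k (f * g) = C.nop k f * g + f * C.nop k g := by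
  simp only [CData.nop, Derivation.leibniz, smul_eq_mul]; ring

lemma nop_sum {ι : Type*} (s : Finset ι) (k) (f : ι → R) :
    C.nop k (∑ i ∈ s, f i) = ∑ i ∈ s, C.nop k (f i) := by
  simp only [CData.nop, map_sum, Finset.mul_sum]

lemma nop_sgn (k) (j : Fin (2 * m)) : C.nop k (sgn R j) = 0 := by
  unfold sgn CData.nop; split_ifs <;> simp

lemma nop_two (k) : C.nop k 2 = 0 := by
  have : C.d k 2 = 0 := by exact_mod_cast (C.d k).map_natCast 2
  rw [CData.nop, this, mul_zero]

lemma nop_one (k) : C.nop k 1 = 0 := by simp [CData.nop]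

lemma nop_x (k j) : C.nop k (C.x j) = if k = j then C.x j else 0 := by
  rw [CData.nop, C.d_x]; split_ifs with h <;> simp [h]

lemma nop_d (k j) (g : R) :
    C.nop k (C.d j g) = C.d j (C.nop k g) - if j = k then C.d j g else 0 := by
  simp only [CData.nop, Derivation.leibniz, smul_eq_mul, C.d_x, C.d_comm k j]
  split_ifs with h
  · subst h; ring
  · ring

lemma nop_comm (k j) (g : R) : C.nop k (C.nop j g) = C.nop j (C.nop k g) := by
  simp only [CData.nop, Derivation.leibniz, smul_eq_mul, C.d_x, C.d_comm k j]
  by_cases h : j = k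
  · subst h; ring
  · simp only [h, Ne.symm h, if_false]; ring

lemma eu_eq_nop (g : R) :
    C.eu g = ∑ j : Fin (2 * m), C.nop j.castSucc g + 2 * C.nop (Fin.last (2 * m)) g := rfl

lemma nop_eu (k) (g : R) : C.nop k (C.eu g) = C.eu (C.nop k g) := by
  rw [eu_eq_nop, eu_eq_nop, nop_add, nop_sum, nop_mul, nop_two, nop_comm C k (Fin.last (2 * m)),
    zero_mul, zero_add]
  congr 1
  exact Finset.sum_congr rfl fun j _ => nop_comm C k _ g

lemma nop_po (i : Fin (2 * m)) (f g : R) :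
    C.nop i.castSucc (C.po f g) = C.po (C.nop i.castSucc f) g + C.po f (C.nop i.castSucc g)
      - sgn R i * (C.dy i f * C.dy (cj m i) g - C.dy (cj m i) f * C.dy i g) := by
  have h1 : sgn R i * (C.dy i f * C.dy (cj m i) g - C.dy (cj m i) f * C.dy i g)
      = ∑ j, sgn R j * ((if j = i then C.dy j f * C.dy (cj m j) g else 0)
          + if j = cj m i then C.dy j f * C.dy (cj m j) g else 0) := by
    simp only [mul_add, Finset.sum_add_distrib, mul_ite, mul_zero, Finset.sum_ite_eq',
      Finset.mem_univ, if_true, cj_cj, sgn_cj]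
    ring
  rw [h1, CData.po, CData.po, CData.po, nop_sum, ← Finset.sum_add_distrib, ← Finset.sum_sub_distrib]
  refine Finset.sum_congr rfl fun j _ => ?_
  have hd : ∀ l g, C.nop i.castSucc (C.dy l g)
      = C.dy l (C.nop i.castSucc g) - if l = i then C.dy l g else 0 := by
    intro l g
    have := nop_d C i.castSucc l.castSucc g
    simp only [Fin.castSucc_inj] at this
    exact this
  rw [nop_mul, nop_mul, nop_sgn, hd, hd]
  have h2 : (cj m j = i) = (j = cj m i) := propext (cj_eq_iff j i)
  simp only [h2]
  split_ifs <;> ring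

lemma nop_dt (i : Fin (2 * m)) (g : R) : C.nop i.castSucc (C.dt g) = C.dt (C.nop i.castSucc g) := by
  have := nop_d C i.castSucc (Fin.last (2 * m)) g
  rw [if_neg (Fin.castSucc_lt_last i).ne', sub_zero] at this
  exact this

lemma nop_br (i : Fin (2 * m)) (f g : R) :
    C.nop i.castSucc (C.br f g) = C.br (C.nop i.castSucc f) g + C.br f (C.nop i.castSucc g)
      - sgn R i * (C.dy i f * C.dy (cj m i) g - C.dy (cj m i) f * C.dy i g) := by
  simp only [CData.br, nop_add, nop_sub, nop_mul, nop_po, nop_dt, nop_eu, nop_two]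
  ring

end Weights

section IntegralWeights

variable {m : ℕ}

lemma coeff_nop (k : Fin (2 * m + 1)) (s : Fin (2 * m + 1) →₀ ℕ) (g : PZ m) :
    ((CP m).nop k g).coeff s = (s k : ℤ) * g.coeff s := by
  change (MvPolynomial.X k * dP k g).coeff s = _
  rw [mul_comm (MvPolynomial.X k : PZ m), MvPolynomial.coeff_mul_X', dP_apply]
  split_ifs with h
  · have hk : s k ≠ 0 := Finsupp.mem_support_iff.1 h
    have h1 : s - Finsupp.single k 1 + Finsupp.single k 1 = s := by
      refine tsub_add_cancel_of_le ?_
      rw [Finsupp.single_le_iff]; omega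
    rw [MvPolynomial.coeff_pderiv, h1]
    have h2 : ((s k - 1 : ℕ) : ℤ) + 1 = s k := by omega
    simp only [Finsupp.coe_tsub, Pi.sub_apply, Finsupp.single_eq_same]
    rw [← h2, mul_comm]
  · rw [Finsupp.mem_support_iff, not_not] at h
    rw [h]; simp

lemma nop_mon (k) (a : Fin (2 * m + 1) → ℕ) : (CP m).nop k (mon a) = (a k : ℤ) • mon a := by
  refine MvPolynomial.ext _ _ fun s => ?_
  rw [coeff_nop, MvPolynomial.coeff_smul, mon, MvPolynomial.coeff_monomial, smul_eq_mul]
  split_ifs with h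
  · rw [← h]; rfl
  · simp

/-- The degree `∑ a_i + 2 a_n` of the grading defined by the Euler derivation. -/
def wt (s : Fin (2 * m + 1) → ℕ) : ℤ :=
  ∑ j : Fin (2 * m), (s j.castSucc : ℤ) + 2 * (s (Fin.last (2 * m)) : ℤ)

lemma coeff_eu (s : Fin (2 * m + 1) →₀ ℕ) (g : PZ m) :
    ((CP m).eu g).coeff s = wt s * g.coeff s := by
  have h2 : (2 : PZ m) = MvPolynomial.C 2 := (map_ofNat MvPolynomial.C 2).symm
  rw [eu_eq_nop, MvPolynomial.coeff_add, MvPolynomial.coeff_sum, h2, MvPolynomial.coeff_C_mul,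
    coeff_nop, wt, add_mul, Finset.sum_mul]
  congr 1
  · exact Finset.sum_congr rfl fun j _ => coeff_nop _ _ _
  · ring

lemma eu_mon (a : Fin (2 * m + 1) → ℕ) : (CP m).eu (mon a) = wt a • mon a := by
  refine MvPolynomial.ext _ _ fun s => ?_
  rw [coeff_eu, MvPolynomial.coeff_smul, mon, MvPolynomial.coeff_monomial, smul_eq_mul]
  split_ifs with h
  · rw [← h]; rfl
  · simp

/-- A weight vector whose weight lies outside `0, …, p-1` vanishes in the truncated algebra. -/
lemma rho_eq_zero_of_weight {F : Type*} [Field F] {p : ℕ} {g : PZ m} (k : Fin (2 * m + 1)) {c : ℤ}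
    (h : (CP m).nop k g = c • g) (hc : c < 0 ∨ (p : ℤ) ≤ c) : rho F p m g = 0 := by
  refine rho_eq_zero fun s hs => ?_
  have h1 := congrArg (MvPolynomial.coeff s) h
  rw [coeff_nop, MvPolynomial.coeff_smul, smul_eq_mul] at h1
  have h2 : ((s k : ℤ) - c) * g.coeff s = 0 := by linear_combination h1
  rcases mul_eq_zero.1 h2 with h3 | h3
  · have := hs k; omega
  · rw [h3]; simp

/-- The weights at `i` and `i'` add up under the bracket, provided the weights of the two
arguments are proportional. -/
lemma weight_br (i : Fin (2 * m)) {f g : PZ m} {α β u v : ℤ}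
    (hα : (CP m).nop i.castSucc f = α • f) (hβ : (CP m).nop (cj m i).castSucc f = β • f)
    (hu : (CP m).nop i.castSucc g = u • g) (hv : (CP m).nop (cj m i).castSucc g = v • g)
    (h : α * v = β * u) :
    (CP m).nop i.castSucc ((CP m).br f g) = (α + u) • (CP m).br f g := by
  have h0 : (CP m).dy i f * (CP m).dy (cj m i) g - (CP m).dy (cj m i) f * (CP m).dy i g = 0 := by
    have hne : (CP m).y i * (CP m).y (cj m i) ≠ 0 :=
      mul_ne_zero (MvPolynomial.X_ne_zero _) (MvPolynomial.X_ne_zero _)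
    refine mul_left_cancel₀ hne ?_
    have hα' : (CP m).y i * (CP m).dy i f = α * f := by rw [← zsmul_eq_mul]; exact hα
    have hβ' : (CP m).y (cj m i) * (CP m).dy (cj m i) f = β * f := by
      rw [← zsmul_eq_mul]; exact hβ
    have hu' : (CP m).y i * (CP m).dy i g = u * g := by rw [← zsmul_eq_mul]; exact hu
    have hv' : (CP m).y (cj m i) * (CP m).dy (cj m i) g = v * g := by
      rw [← zsmul_eq_mul]; exact hv
    have hh : (α : PZ m) * v = β * u := by exact_mod_cast congrArg (Int.cast (R := PZ m)) h
    linear_combination (CP m).y (cj m i) * (CP m).dy (cj m i) g * hα' + α * f * hv'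
      - (CP m).y i * (CP m).dy i g * hβ' - β * f * hu' + f * g * hh
  rw [nop_br, h0, hα, hu, br_zsmul_left, br_zsmul_right, add_smul]
  ring

lemma weight_iterate (i : Fin (2 * m)) {f g : PZ m} {α β u v : ℤ}
    (hα : (CP m).nop i.castSucc f = α • f) (hβ : (CP m).nop (cj m i).castSucc f = β • f)
    (hu : (CP m).nop i.castSucc g = u • g) (hv : (CP m).nop (cj m i).castSucc g = v • g)
    (h : α * v = β * u) (r : ℕ) :
    (CP m).nop i.castSucc (((CP m).br f)^[r] g) = (r * α + u) • ((CP m).br f)^[r] g ∧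
    (CP m).nop (cj m i).castSucc (((CP m).br f)^[r] g) = (r * β + v) • ((CP m).br f)^[r] g := by
  induction r with
  | zero =>
    refine ⟨?_, ?_⟩ <;> rw [Nat.cast_zero, zero_mul, zero_add]
    exacts [hu, hv]
  | succ r ih =>
    rw [Function.iterate_succ_apply']
    have h1 := weight_br i hα hβ ih.1 ih.2 (by linear_combination h)
    have h2 := weight_br (cj m i) (f := f) (g := ((CP m).br f)^[r] g) (α := β) (β := α)
      hβ (by rw [cj_cj]; exact hα) ih.2 (by rw [cj_cj]; exact ih.1) (by linear_combination - h)
    rw [h1, h2]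
    push_cast
    constructor <;> congr 1 <;> ring

/-- Weights at `x_n`, for the bracket with a power of `x_n`. -/
lemma weight_t_iterate {f g : PZ m} {s u : ℤ} (hf : ∀ i, (CP m).dy i f = 0)
    (hs : (CP m).nop (Fin.last _) f = s • f) (hu : (CP m).nop (Fin.last _) g = u • g) (r : ℕ) :
    (CP m).nop (Fin.last _) (((CP m).br f)^[r] g) = (r * (s - 1) + u) • ((CP m).br f)^[r] g := by
  have nd : ∀ g, (CP m).nop (Fin.last _) ((CP m).dt g)
      = (CP m).dt ((CP m).nop (Fin.last _) g) - (CP m).dt g := by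
    intro g
    have := nop_d (CP m) (Fin.last _) (Fin.last _) g
    rw [if_pos rfl] at this
    exact this
  have hpo : ∀ g, (CP m).po f g = 0 := fun g => by simp [CData.po, hf]
  induction r with
  | zero =>
    rw [Nat.cast_zero, zero_mul, zero_add]
    exact hu
  | succ r ih =>
    rw [Function.iterate_succ_apply']
    set y := ((CP m).br f)^[r] g
    have he : ∀ (k : ℤ) h, (CP m).eu (k • h) = k • (CP m).eu h := fun k h =>
      map_zsmul (AddMonoidHom.mk' (CP m).eu (eu_add _)) k h
    rw [CData.br, hpo]
    have h0 : (CP m).nop (Fin.last _) (0 : PZ m) = 0 := by simp [CData.nop]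
    simp only [nop_add, nop_sub, nop_mul, nd, nop_eu, nop_two, h0, hs, ih, he, map_zsmul]
    simp only [zsmul_eq_mul]
    push_cast
    ring

lemma eu_iterate {f g : PZ m} {d u : ℤ} (hf : (CP m).eu f = d • f) (hg : (CP m).eu g = u • g)
    (r : ℕ) :
    (CP m).eu (((CP m).br f)^[r] g) = (r * (d - 2) + u) • ((CP m).br f)^[r] g := by
  induction r with
  | zero =>
    rw [Nat.cast_zero, zero_mul, zero_add]
    exact hg
  | succ r ih =>
    rw [Function.iterate_succ_apply']
    set y := ((CP m).br f)^[r] g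
    have h := jacobi (CP m).t f y
    have h2 : ∀ (k : ℤ) (h : PZ m), k • h - 2 * h = (k - 2) • h := by
      intro k h; simp only [zsmul_eq_mul]; push_cast; ring
    rw [br_t_left, br_t_left, br_t_left, hf, ih, h2, h2, br_zsmul_left, br_zsmul_right] at h
    simp only [zsmul_eq_mul] at h ⊢
    push_cast at h ⊢
    linear_combination h

end IntegralWeights

/-! ### The `p`-th powers of monomials -/

section PPowers

variable {m : ℕ} {F : Type*} [Field F] {p : ℕ} [CharP F p]

lemma rho_nop (k : Fin (2 * m + 1)) (g : PZ m) :
    rho F p m ((CP m).nop k g) = (CA F p m).nop k (rho F p m g) := by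
  rw [CData.nop, map_mul, CData.nop]
  congr 1
  · exact rho_X F p m k
  · exact (dA_rho F p m k g).symm

lemma coeffT_nop {c : Fin (2 * m + 1) → ℕ} (hc : ∀ i, c i < p) (k : Fin (2 * m + 1))
    (g : TruncP F p (2 * m + 1)) :
    coeffT F p (2 * m + 1) c ((CA F p m).nop k g) = (c k : F) * coeffT F p (2 * m + 1) c g := by
  refine rho_add_induction (q := fun g => coeffT F p (2 * m + 1) c ((CA F p m).nop k g)
    = (c k : F) * coeffT F p (2 * m + 1) c g) (fun r g => ?_) (fun a b ha hb => ?_) g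
  · have h1 : (CA F p m).nop k (r • rho F p m g) = r • (CA F p m).nop k (rho F p m g) := by
      have : (CA F p m).d k (r • rho F p m g) = r • (CA F p m).d k (rho F p m g) :=
        dA_smul F p m _ _ _
      rw [CData.nop, this, mul_smul_comm]
      rfl
    rw [h1, ← rho_nop, map_smul, map_smul, coeffT_rho hc, coeffT_rho hc, coeff_nop]
    simp only [smul_eq_mul, Finsupp.equivFunOnFinite_symm_apply_apply]
    push_cast
    ring
  · rw [nop_add, map_add, map_add, ha, hb, mul_add]

/-- The operator `(ad f)^p - ad g` reduces to an inner derivation. -/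
lemma exists_pT_rep (hp : p.Prime) (hp2 : 2 < p) (f g : PZ m) :
    ∃ v, ∀ y, rho F p m (pT p f g y) = (CA F p m).br v (rho F p m y) := by
  refine ad_rep_rho F p m hp2 ((rho F p m).toAddMonoidHom.comp (pT p f g)) ?_ ?_
  · intro a b
    change rho F p m (pT p f g (a * b)) = rho F p m (pT p f g a) * rho F p m b
      + rho F p m a * rho F p m (pT p f g b)
      - rho F p m (pT p f g 1) * (rho F p m a * rho F p m b)
    obtain ⟨h, e⟩ := pT_mul hp f g a b
    rw [e, map_add, map_sub, map_add, rho_char, add_zero, map_mul, map_mul, map_mul, map_mul]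
    ring
  · intro a b
    change rho F p m (pT p f g ((CP m).br a b))
      = (CA F p m).br (rho F p m (pT p f g a)) (rho F p m b)
        + (CA F p m).br (rho F p m a) (rho F p m (pT p f g b))
    obtain ⟨h, e⟩ := pT_br hp f g a b
    rw [e, map_add, map_sub, rho_char, add_zero, rho_br, rho_br,
      br_swap _ (rho F p m (pT p f g b))]
    ring

/-- The operator `(ad f)^p - ad g` is inner modulo `p`, so it suffices to test it on the generators. -/
lemma pT_eq_zero (hp : p.Prime) (hp2 : 2 < p) {f g : PZ m} (h1 : rho F p m (pT p f g 1) = 0)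
    (hy : ∀ i, rho F p m (pT p f g ((CP m).y i)) = 0) (ht : rho F p m (pT p f g (CP m).t) = 0)
    (y : PZ m) : rho F p m (pT p f g y) = 0 := by
  obtain ⟨v, hv⟩ := exists_pT_rep (F := F) hp hp2 f g
  rw [hv]
  refine (br_fo (CA F p m) (rho F p m) v).eq_zero ?_ ?_ ?_ y
  · exact (hv 1).symm.trans h1
  · exact fun i => (hv _).symm.trans (hy i)
  · exact (hv _).symm.trans ht

lemma iterate_eigen {f y : PZ m} {c : ℤ} (h : (CP m).br f y = c • y) (r : ℕ) :
    ((CP m).br f)^[r] y = c ^ r • y := by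
  induction r with
  | zero => simp
  | succ r ih =>
    rw [Function.iterate_succ_apply', ih, br_zsmul_right, h, smul_smul, pow_succ]

/-- On eigenvectors of `ad f` with integral eigenvalue, `(ad f)^p = ad f` modulo `p`. -/
lemma pT_eigen (hp : p.Prime) {f y : PZ m} {c : ℤ} (h : (CP m).br f y = c • y) :
    rho F p m (pT p f f y) = 0 := by
  have := Fact.mk hp
  have h1 : (p : ℤ) ∣ c ^ p - c := by
    rw [← ZMod.intCast_eq_intCast_iff_dvd_sub]
    push_cast
    exact (ZMod.pow_card _).symm
  obtain ⟨k, hk⟩ := h1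
  rw [pT_apply, iterate_eigen h, h, ← sub_smul, hk, mul_smul, Nat.cast_smul_eq_nsmul, rho_char]

lemma pT_zero (f y : PZ m) : pT p f 0 y = ((CP m).br f)^[p] y := by
  rw [pT_apply, br_zero_left, sub_zero]

/-- `ad f` squares to zero on `y` as soon as it maps `y` to a multiple of `f`. -/
lemma iterate_of_multiple {f y : PZ m} {c : ℤ} (h : (CP m).br f y = c • f) {r : ℕ} (hr : 2 ≤ r) :
    ((CP m).br f)^[r] y = 0 := by
  obtain ⟨k, rfl⟩ := Nat.exists_eq_add_of_le' hr
  rw [Function.iterate_add_apply]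
  change ((CP m).br f)^[k] ((CP m).br f ((CP m).br f y)) = 0
  rw [h, br_zsmul_right, br_self, smul_zero]
  exact iterate_zero ((CP m).ad f) k

lemma pT_t (hp : p.Prime) (hp2 : 2 < p) (y : PZ m) :
    rho F p m (pT p (CP m).t (CP m).t y) = 0 := by
  refine pT_eq_zero hp hp2 (pT_eigen hp (c := -2) ?_) (fun i => pT_eigen hp (c := -1) ?_)
    (pT_eigen hp (c := 0) ?_) y
  · rw [br_t_one]; simp
  · rw [br_t_y]; simp
  · rw [br_t_t]; simp

lemma pT_q (hp : p.Prime) (hp2 : 2 < p) (i : Fin (2 * m)) (y : PZ m) :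
    rho F p m (pT p ((CP m).y i * (CP m).y (cj m i)) ((CP m).y i * (CP m).y (cj m i)) y) = 0 := by
  have hsg : ∀ l : Fin (2 * m), ∃ c : ℤ, sgn (PZ m) l = c := by
    intro l; unfold sgn; split_ifs
    · exact ⟨1, by simp⟩
    · exact ⟨-1, by simp⟩
  refine pT_eq_zero hp hp2 (pT_eigen hp (c := 0) ?_) (fun l => ?_) (pT_eigen hp (c := 0) ?_) y
  · rw [br_one_right]; simp [dt_y]
  · obtain ⟨s, hs⟩ := hsg l
    have h1 : (CP m).br ((CP m).y i * (CP m).y (cj m i)) ((CP m).y l)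
        = - (sgn _ l * (CP m).dy (cj m l) ((CP m).y i * (CP m).y (cj m i))) := by
      rw [br_swap, br_y_left]; simp [dt_y]
    have h2 : (cj m l = i) = (l = cj m i) := propext (cj_eq_iff l i)
    have h3 : (cj m l = cj m i) = (l = i) := propext ⟨fun h => by rw [← cj_cj l, h, cj_cj],
      fun h => by rw [h]⟩
    rw [hs] at h1
    simp only [Derivation.leibniz, dy_y, smul_eq_mul, h2, h3] at h1
    by_cases hl : l = i
    · subst hl
      refine pT_eigen hp (c := -s) ?_
      rw [h1, if_pos rfl, if_neg (cj_ne l).symm]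
      simp
    · by_cases hl' : l = cj m i
      · refine pT_eigen hp (c := -s) ?_
        rw [h1, if_neg hl, if_pos hl', hl']
        simp
      · refine pT_eigen hp (c := 0) ?_
        rw [h1, if_neg hl, if_neg hl']
        simp
  · rw [br_swap, br_t_left, eu_mul, eu_y, eu_y, zero_smul]; ring

lemma dy_eq_zero_of_nop {i : Fin (2 * m)} {f : PZ m} (h : (CP m).nop i.castSucc f = 0) :
    (CP m).dy i f = 0 :=
  (mul_eq_zero.1 h).resolve_left (MvPolynomial.X_ne_zero _)

lemma br_mon_t (a : Fin (2 * m + 1) → ℕ) :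
    (CP m).br (mon a) (CP m).t = (2 - wt a) • mon a := by
  rw [br_swap, br_t_left, eu_mon]
  simp only [zsmul_eq_mul]
  push_cast
  ring

lemma nop_y (k : Fin (2 * m + 1)) (l : Fin (2 * m)) (h : k ≠ l.castSucc) (c : ℤ) (hc : c = 0) :
    (CP m).nop k ((CP m).y l) = c • (CP m).y l := by
  rw [CData.y, nop_x, if_neg h, hc, zero_smul]

/-- The `p`-th power of `x_n^s` vanishes for `s ≠ 1`. -/
lemma pT_pow_t (hp : p.Prime) (hp2 : 2 < p) {a : Fin (2 * m + 1) → ℕ}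
    (ha : ∀ i : Fin (2 * m), a i.castSucc = 0) (h1 : a (Fin.last _) ≠ 1) (y : PZ m) :
    rho F p m (pT p (mon a) 0 y) = 0 := by
  have hf : ∀ i, (CP m).dy i (mon a) = 0 := fun i =>
    dy_eq_zero_of_nop (by rw [nop_mon, ha]; simp)
  have key : ∀ g : PZ m, (CP m).nop (Fin.last _) g = (0 : ℤ) • g →
      rho F p m (pT p (mon a) 0 g) = 0 := by
    intro g hg
    rw [pT_zero]
    refine rho_eq_zero_of_weight _ (weight_t_iterate hf (nop_mon _ a) hg p) ?_
    have hp0 := hp.pos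
    rcases Nat.eq_zero_or_pos (a (Fin.last _)) with h | h
    · left; rw [h]; push_cast; linarith
    · right
      have h2 : (2 : ℤ) ≤ a (Fin.last _) := by omega
      nlinarith
  refine pT_eq_zero hp hp2 (key 1 ?_) (fun l => key _ ?_) ?_ y
  · rw [nop_one, zero_smul]
  · exact nop_y _ _ (Fin.castSucc_lt_last l).ne' _ rfl
  · rw [pT_zero, iterate_of_multiple (br_mon_t a) hp.two_le, map_zero]

end PPowers

section PPowers

variable {m : ℕ} {F : Type*} [Field F] {p : ℕ} [CharP F p]

lemma wt_ne_two {a : Fin (2 * m + 1) → ℕ} {i : Fin (2 * m)} (h1 : 1 ≤ a i.castSucc)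
    (h2 : 1 ≤ a (cj m i).castSucc) (h : a ≠ Pi.single i.castSucc 1 + Pi.single (cj m i).castSucc 1) :
    wt a ≠ 2 := by
  intro hw
  apply h
  have hw' : ∑ j : Fin (2 * m), a j.castSucc + 2 * a (Fin.last (2 * m)) = 2 := by
    unfold wt at hw; exact_mod_cast hw
  have hp : ∑ j ∈ ({i, cj m i} : Finset (Fin (2 * m))), a j.castSucc
      = a i.castSucc + a (cj m i).castSucc := Finset.sum_pair (cj_ne i).symm
  have hle : ∑ j ∈ ({i, cj m i} : Finset (Fin (2 * m))), a j.castSucc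
      ≤ ∑ j : Fin (2 * m), a j.castSucc := Finset.sum_le_sum_of_subset (Finset.subset_univ _)
  funext k
  induction k using Fin.lastCases with
  | last =>
    have e1 : Fin.last (2 * m) ≠ i.castSucc := (Fin.castSucc_lt_last i).ne'
    have e2 : Fin.last (2 * m) ≠ (cj m i).castSucc := (Fin.castSucc_lt_last _).ne'
    simp only [Pi.add_apply, Pi.single_apply, e1, e2, if_false]
    omega
  | cast l =>
    simp only [Pi.add_apply, Pi.single_apply, Fin.castSucc_inj]
    by_cases hl : l = i
    · subst hl; rw [if_pos rfl, if_neg (cj_ne l).symm]; omega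
    · by_cases hl' : l = cj m i
      · rw [if_neg hl, if_pos hl', hl']; omega
      · rw [if_neg hl, if_neg hl']
        have hmem : l ∉ ({i, cj m i} : Finset (Fin (2 * m))) := by
          rw [Finset.mem_insert, Finset.mem_singleton, not_or]; exact ⟨hl, hl'⟩
        have h3 : a l.castSucc + ∑ j ∈ ({i, cj m i} : Finset (Fin (2 * m))), a j.castSucc
            = ∑ j ∈ insert l ({i, cj m i} : Finset (Fin (2 * m))), a j.castSucc :=
          (Finset.sum_insert (f := fun j : Fin (2 * m) => a j.castSucc) hmem).symm
        have h4 : ∑ j ∈ insert l ({i, cj m i} : Finset (Fin (2 * m))), a j.castSucc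
            ≤ ∑ j : Fin (2 * m), a j.castSucc := Finset.sum_le_sum_of_subset (Finset.subset_univ _)
        omega

lemma two_mul_cancel (hp2 : 2 < p) {v w : TruncP F p (2 * m + 1)} (h : 2 * v = 2 * w) : v = w := by
  refine nsmul_inj (F := F) (k := 2) ?_ (by rw [two_nsmul, two_nsmul, ← two_mul, ← two_mul, h])
  rw [Ne, CharP.cast_eq_zero_iff F p]
  intro h'
  exact absurd (Nat.le_of_dvd (by norm_num) h') (by omega)

lemma sgn_cancel {R : Type*} [CommRing R] (l : Fin (2 * m)) {v : R} (h : sgn R l * v = 0) :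
    v = 0 := by
  calc v = sgn R l * (sgn R l * v) := by rw [← mul_assoc, sgn_mul_self, one_mul]
    _ = 0 := by rw [h, mul_zero]

/-- A vector whose bracket kills `1`, `x_n`, `x_i x_{i'}` and all the coordinates other than `x_i`
and `x_{i'}` is fixed by `x_i D_i` and by `x_{i'} D_{i'}`, and is independent of the other
variables. -/
lemma br_vector (hp2 : 2 < p) (i : Fin (2 * m)) {v : TruncP F p (2 * m + 1)}
    (h1 : (CA F p m).br v 1 = 0) (ht : (CA F p m).br v (CA F p m).t = 0)
    (hq : (CA F p m).br v ((CA F p m).y i * (CA F p m).y (cj m i)) = 0)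
    (hy : ∀ l, l ≠ i → l ≠ cj m i → (CA F p m).br v ((CA F p m).y l) = 0) :
    (CA F p m).dt v = 0 ∧ (∀ l, l ≠ i → l ≠ cj m i → (CA F p m).dy l v = 0) ∧
    (CA F p m).y i * (CA F p m).dy i v = v ∧
    (CA F p m).y (cj m i) * (CA F p m).dy (cj m i) v = v := by
  have hdt : (CA F p m).dt v = 0 := by
    rw [br_one_right] at h1
    refine two_mul_cancel hp2 ?_
    linear_combination - h1
  have hbr : ∀ l, (CA F p m).br v ((CA F p m).y l) = - (sgn _ l * (CA F p m).dy (cj m l) v) := by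
    intro l
    rw [br_swap, br_y_left, hdt, mul_zero, add_zero]
  have hdy : ∀ l, l ≠ i → l ≠ cj m i → (CA F p m).dy l v = 0 := by
    intro l hl hl'
    have := hy (cj m l) (fun h => hl' ((cj_eq_iff l i).1 h)) (fun h => hl (by rw [← cj_cj l, h, cj_cj]))
    rw [hbr, cj_cj, neg_eq_zero] at this
    exact sgn_cancel _ this
  have heu : (CA F p m).y i * (CA F p m).dy i v + (CA F p m).y (cj m i) * (CA F p m).dy (cj m i) v
      = 2 * v := by
    rw [br_swap, br_t_left, CData.eu, hdt, mul_zero, mul_zero, add_zero,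
      ← Finset.sum_subset (Finset.subset_univ ({i, cj m i} : Finset (Fin (2 * m)))),
      Finset.sum_pair (cj_ne i).symm] at ht
    · linear_combination - ht
    · intro l _ hl
      simp only [Finset.mem_insert, Finset.mem_singleton, not_or] at hl
      rw [hdy l hl.1 hl.2, mul_zero]
  have hq' : (CA F p m).y i * (CA F p m).dy i v
      = (CA F p m).y (cj m i) * (CA F p m).dy (cj m i) v := by
    rw [br_mul_right, h1, hbr, hbr, cj_cj, sgn_cj] at hq
    rw [← sub_eq_zero]
    refine sgn_cancel i ?_
    linear_combination hq
  refine ⟨hdt, hdy, two_mul_cancel hp2 ?_, two_mul_cancel hp2 ?_⟩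
  · linear_combination heu + hq'
  · linear_combination heu - hq'

/-- For the vectors of `br_vector`, the derivative by `x_{i'}` is a multiple of `x_i`. -/
lemma dy_eq_zero_of_coeff (hp2 : 2 < p) (i : Fin (2 * m))
    {v : TruncP F p (2 * m + 1)}
    (hdt : (CA F p m).dt v = 0) (hdy : ∀ l, l ≠ i → l ≠ cj m i → (CA F p m).dy l v = 0)
    (hi : (CA F p m).y i * (CA F p m).dy i v = v)
    (hi' : (CA F p m).y (cj m i) * (CA F p m).dy (cj m i) v = v)
    (hc : coeffT F p (2 * m + 1) (Pi.single i.castSucc 1) ((CA F p m).dy (cj m i) v) = 0) :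
    (CA F p m).dy (cj m i) v = 0 := by
  have hnop : ∀ k, (CA F p m).nop k ((CA F p m).dy (cj m i) v)
      = if k = i.castSucc then (CA F p m).dy (cj m i) v else 0 := by
    intro k
    have h := nop_d (CA F p m) k (cj m i).castSucc v
    change (CA F p m).nop k ((CA F p m).dy (cj m i) v)
      = (CA F p m).dy (cj m i) ((CA F p m).nop k v)
        - if (cj m i).castSucc = k then (CA F p m).dy (cj m i) v else 0 at h
    rw [h]
    induction k using Fin.lastCases with
    | last =>
      rw [if_neg (Fin.castSucc_lt_last _).ne, if_neg (Fin.castSucc_lt_last _).ne', CData.nop]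
      change (CA F p m).dy (cj m i) (_ * (CA F p m).dt v) - 0 = 0
      rw [hdt, mul_zero, map_zero, sub_zero]
    | cast l =>
      change (CA F p m).dy (cj m i) ((CA F p m).y l * (CA F p m).dy l v) - _ = _
      simp only [Fin.castSucc_inj]
      by_cases hl : l = i
      · subst hl
        rw [hi, if_neg (cj_ne l), if_pos rfl, sub_zero]
      · by_cases hl' : l = cj m i
        · subst hl'
          rw [hi', if_pos rfl, if_neg (cj_ne i), sub_self]
        · rw [hdy l hl hl', if_neg (Ne.symm hl'), if_neg hl, mul_zero, map_zero, sub_zero]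
  refine eq_zero_of_coeffT fun c hcb => ?_
  by_contra hne
  refine hne ?_
  have hcs : c = Pi.single i.castSucc 1 := by
    funext k
    have h := coeffT_nop hcb k ((CA F p m).dy (cj m i) v)
    rw [hnop] at h
    rw [Pi.single_apply]
    split_ifs at h ⊢ with hk
    · have h1 : ((c k : ℕ) : F) = ((1 : ℕ) : F) := by
        rw [Nat.cast_one]
        exact mul_right_cancel₀ hne (by rw [← h, one_mul])
      rw [CharP.natCast_eq_natCast F p] at h1
      exact Nat.ModEq.eq_of_lt_of_lt h1 (hcb k) (by omega)
    · rw [map_zero] at h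
      have h1 := (mul_eq_zero.1 h.symm).resolve_right hne
      rw [CharP.cast_eq_zero_iff F p] at h1
      exact Nat.eq_zero_of_dvd_of_lt h1 (hcb k)
  rw [hcs]
  exact hc

/-- The `p`-th power of a monomial involving `x_i`, other than `x_i x_{i'}`, vanishes. -/
lemma pT_mon (hp : p.Prime) (hp2 : 2 < p) {a : Fin (2 * m + 1) → ℕ} {i : Fin (2 * m)}
    (hi : 1 ≤ a i.castSucc)
    (hne : a ≠ Pi.single i.castSucc 1 + Pi.single (cj m i).castSucc 1) (y : PZ m) :
    rho F p m (pT p (mon a) 0 y) = 0 := by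
  obtain ⟨v, hv⟩ := exists_pT_rep (F := F) hp hp2 (mon a) 0
  have hp0 : (0 : ℤ) < p := by exact_mod_cast hp.pos
  have hai : (1 : ℤ) ≤ a i.castSucc := by exact_mod_cast hi
  -- vectors of weight `0` at `i` and `i'` are sent to weight `p a_i`
  have key : ∀ g : PZ m, (CP m).nop i.castSucc g = (0 : ℤ) • g →
      (CP m).nop (cj m i).castSucc g = (0 : ℤ) • g → rho F p m (pT p (mon a) 0 g) = 0 := by
    intro g hg hg'
    rw [pT_zero]
    refine rho_eq_zero_of_weight _
      (weight_iterate i (nop_mon _ a) (nop_mon _ a) hg hg' (by ring) p).1 (Or.inr ?_)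
    nlinarith
  have hv1 : (CA F p m).br v 1 = 0 := by
    rw [← (rho F p m).map_one, ← hv]
    exact key 1 (by rw [nop_one, zero_smul]) (by rw [nop_one, zero_smul])
  have hvt : (CA F p m).br v (CA F p m).t = 0 := by
    rw [← rho_t, ← hv, pT_zero, iterate_of_multiple (br_mon_t a) hp.two_le, map_zero]
  have hvy : ∀ l, l ≠ i → l ≠ cj m i → (CA F p m).br v ((CA F p m).y l) = 0 := by
    intro l hl hl'
    rw [← rho_y, ← hv]
    exact key _ (nop_y _ _ (by rw [Ne, Fin.castSucc_inj]; exact Ne.symm hl) _ rfl)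
      (nop_y _ _ (by rw [Ne, Fin.castSucc_inj]; exact Ne.symm hl') _ rfl)
  have hvq : (CA F p m).br v ((CA F p m).y i * (CA F p m).y (cj m i)) = 0 := by
    rw [← rho_y, ← rho_y, ← map_mul, ← hv, pT_zero]
    have h : ∃ c : ℤ, (CP m).br (mon a) ((CP m).y i * (CP m).y (cj m i)) = c • mon a := by
      have h1 : (CP m).br (mon a) ((CP m).y i * (CP m).y (cj m i))
          = sgn _ i * ((CP m).nop i.castSucc (mon a) - (CP m).nop (cj m i).castSucc (mon a)) := by
        have e1 : (CP m).nop i.castSucc (mon a) = (CP m).y i * (CP m).dy i (mon a) := rfl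
        have e2 : (CP m).nop (cj m i).castSucc (mon a)
          = (CP m).y (cj m i) * (CP m).dy (cj m i) (mon a) := rfl
        rw [br_mul_right, br_swap _ _ ((CP m).y i), br_swap _ _ ((CP m).y (cj m i)), br_y_left,
          br_y_left, cj_cj, sgn_cj, br_one_right, e1, e2]
        ring
      rw [h1, nop_mon, nop_mon, ← sub_smul]
      unfold sgn
      split_ifs
      · exact ⟨_, one_mul _⟩
      · exact ⟨-((a i.castSucc : ℤ) - a (cj m i).castSucc), by rw [neg_one_mul, neg_smul]⟩
    obtain ⟨c, hc⟩ := h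
    rw [iterate_of_multiple hc hp.two_le, map_zero]
  obtain ⟨hdt, hdy, hvi, hvi'⟩ := br_vector hp2 i hv1 hvt hvq hvy
  have hyi : rho F p m (((CP m).br (mon a))^[p] ((CP m).y i))
      = - (sgn _ i * (CA F p m).dy (cj m i) v) := by
    rw [← pT_zero, hv, rho_y, br_swap, br_y_left, hdt, mul_zero, add_zero]
  have hw0 : (CA F p m).dy (cj m i) v = 0 := by
    rcases Nat.eq_zero_or_pos (a (cj m i).castSucc) with h0 | h0
    · refine sgn_cancel i (neg_eq_zero.1 ?_)
      rw [← hyi]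
      refine rho_eq_zero_of_weight i.castSucc (weight_iterate i (nop_mon _ a) (nop_mon _ a)
        (u := 1) (v := 0) ?_ ?_ (by rw [h0]; simp) p).1 (Or.inr ?_)
      · rw [CData.y, nop_x, if_pos rfl, one_smul]
      · exact nop_y _ _ (by rw [Ne, Fin.castSucc_inj]; exact cj_ne i) _ rfl
      · nlinarith
    · refine dy_eq_zero_of_coeff hp2 i hdt hdy hvi hvi' ?_
      have hbox : ∀ k, (Pi.single i.castSucc 1 : Fin (2 * m + 1) → ℕ) k < p := by
        intro k; rw [Pi.single_apply]; split_ifs <;> omega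
      have h1 : (CA F p m).dy (cj m i) v
          = rho F p m (- (sgn _ i * ((CP m).br (mon a))^[p] ((CP m).y i))) := by
        rw [map_neg, map_mul, rho_sgn, hyi]
        linear_combination - (CA F p m).dy (cj m i) v * sgn_mul_self (R := TruncP F p (2 * m + 1)) i
      -- the integral coefficient vanishes because of the degrees
      have h2 : (((CP m).br (mon a))^[p] ((CP m).y i)).coeff
          (Finsupp.equivFunOnFinite.symm (Pi.single i.castSucc 1)) = 0 := by
        have he := eu_iterate (eu_mon a) (u := 1) (g := (CP m).y i) (by rw [eu_y, one_smul]) p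
        have h3 := congrArg (MvPolynomial.coeff
          (Finsupp.equivFunOnFinite.symm (Pi.single i.castSucc 1))) he
        rw [coeff_eu, MvPolynomial.coeff_smul, smul_eq_mul] at h3
        have h4 : wt (Pi.single i.castSucc 1 : Fin (2 * m + 1) → ℕ) = 1 := by
          have e1 : Fin.last (2 * m) ≠ i.castSucc := (Fin.castSucc_lt_last i).ne'
          simp [wt, Pi.single_apply, e1, Fin.castSucc_inj]
        change wt (Pi.single i.castSucc 1) * _ = _ at h3
        rw [h4] at h3
        have h5 : (p * (wt a - 2) : ℤ) * (((CP m).br (mon a))^[p] ((CP m).y i)).coeff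
            (Finsupp.equivFunOnFinite.symm (Pi.single i.castSucc 1)) = 0 := by
          linear_combination - h3
        refine (mul_eq_zero.1 h5).resolve_left (mul_ne_zero hp0.ne' (sub_ne_zero.2 ?_))
        exact wt_ne_two hi h0 hne
      rw [h1, coeffT_rho hbox, MvPolynomial.coeff_neg]
      unfold sgn
      split_ifs
      · rw [one_mul, h2]; simp
      · rw [neg_one_mul, MvPolynomial.coeff_neg, h2]; simp
  have hv0 : v = 0 := by rw [← hvi', hw0, mul_zero]
  rw [hv, hv0, br_zero_left]

open scoped Classical in
/-- The chosen integral lift of the `p`-th power of the monomial `x^a`. -/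
def ppow (m : ℕ) (a : Fin (2 * m + 1) → ℕ) : PZ m :=
  if (∃ i : Fin (2 * m), (i : ℕ) < m ∧
        a = Pi.single i.castSucc 1 + Pi.single (cj m i).castSucc 1)
      ∨ a = Pi.single (Fin.last (2 * m)) 1
  then mon a else 0

lemma rho_ppow (a : Fin (2 * m + 1) → ℕ) : rho F p m (ppow m a) = KpPow F p m a := by
  classical
  unfold ppow KpPow
  split_ifs
  · exact rho_mon F p m a
  · exact map_zero _

lemma mon_t : mon (Pi.single (Fin.last (2 * m)) 1) = (CP m).t := by
  change _ = MvPolynomial.X _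
  rw [mon, MvPolynomial.X]
  congr 2
  ext i
  simp [Finsupp.single_apply, eq_comm]

lemma mon_q (i j : Fin (2 * m)) :
    mon (Pi.single i.castSucc 1 + Pi.single j.castSucc 1) = (CP m).y i * (CP m).y j := by
  change _ = MvPolynomial.X _ * MvPolynomial.X _
  rw [mon, MvPolynomial.X, MvPolynomial.X, MvPolynomial.monomial_mul, one_mul]
  congr 2
  ext k
  simp [Pi.single_apply, Finsupp.single_apply, eq_comm]

/-- The `p`-th powers of the monomials: the operator `(ad x^a)^p - ad (x^a)^{[p]}` vanishes on the
truncated algebra. -/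
lemma pT_ppow (hp : p.Prime) (hp2 : 2 < p) (a : Fin (2 * m + 1) → ℕ) (y : PZ m) :
    rho F p m (pT p (mon a) (ppow m a) y) = 0 := by
  unfold ppow
  split_ifs with h
  · rcases h with ⟨i, -, h⟩ | h
    · rw [h, mon_q]; exact pT_q hp hp2 i y
    · rw [h, mon_t]; exact pT_t hp hp2 y
  · rw [not_or] at h
    by_cases h0 : ∃ i : Fin (2 * m), a i.castSucc ≠ 0
    · obtain ⟨i, hi⟩ := h0
      refine pT_mon hp hp2 (Nat.one_le_iff_ne_zero.2 hi) (fun he => h.1 ?_) y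
      by_cases him : (i : ℕ) < m
      · exact ⟨i, him, he⟩
      · refine ⟨cj m i, ?_, by rw [cj_cj, he]; exact add_comm _ _⟩
        have := i.isLt
        simp only [cj, him, dif_neg, not_false_eq_true]
        omega
    · push Not at h0
      refine pT_pow_t hp hp2 h0 (fun h1 => h.2 ?_) y
      funext k
      induction k using Fin.lastCases with
      | last => simp [h1]
      | cast l => simp [h0, (Fin.castSucc_lt_last l).ne]

end PPowers

/-! ### The contact algebra is the kernel of the top coefficient -/

section Membership

variable {m : ℕ} {F : Type*} [Field F] {p : ℕ}

lemma mem_Ksub [CharP F p] (hdvd : p ∣ m + 2) {g : TruncP F p (2 * m + 1)}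
    (h : coeffT F p (2 * m + 1) (fun _ => p - 1) g = 0) : g ∈ Ksub F p m := by
  rw [Ksub, if_pos hdvd]
  obtain ⟨f, rfl⟩ := Ideal.Quotient.mk_surjective g
  rw [f.as_sum, map_sum]
  refine Submodule.sum_mem _ fun s _ => ?_
  by_cases hs : ∃ i, p ≤ s i
  · obtain ⟨i, hi⟩ := hs
    rw [monomial_mem_trunc hi]
    exact Submodule.zero_mem _
  · push Not at hs
    have h3 : Finsupp.equivFunOnFinite.symm (s : Fin (2 * m + 1) → ℕ) = s := by ext; rfl
    by_cases hst : (s : Fin (2 * m + 1) → ℕ) = fun _ => p - 1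
    · rw [← hst, coeffT, dif_pos hs, liftF_mk] at h
      have h2 : f.coeff s = 0 := by
        rw [← h3]
        exact h
      rw [h2, map_zero, map_zero]
      exact Submodule.zero_mem _
    · have h4 : (Ideal.Quotient.mk (truncIdeal F p (2 * m + 1)))
          (MvPolynomial.monomial s (f.coeff s)) = f.coeff s • xpow F p (2 * m + 1) s := by
        rw [xpow, ← Ideal.Quotient.mkₐ_eq_mk F, ← map_smul, MvPolynomial.smul_monomial,
          smul_eq_mul, mul_one, h3]
      rw [h4]
      exact Submodule.smul_mem _ _ (Submodule.subset_span ⟨s, hs, hst, rfl⟩)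

/-- The exponent `τ = (p-1, …, p-1)` as a finitely supported function. -/
def tau (p m : ℕ) : Fin (2 * m + 1) →₀ ℕ := Finsupp.equivFunOnFinite.symm fun _ => p - 1

/-- The coefficient of `x^τ` modulo `p`, on integral polynomials. -/
def topc (F : Type*) [Field F] (p m : ℕ) : PZ m →+ F :=
  (Int.castAddHom F).comp (MvPolynomial.lcoeff ℤ (tau p m)).toAddMonoidHom

lemma topc_apply (g : PZ m) : topc F p m g = ((g.coeff (tau p m) : ℤ) : F) := rfl

/-- The Poisson part of the bracket is a sum of derivatives, since `∑ σ(j) D_j D_{j'} = 0`. -/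
lemma po_eq_sum_dy (f g : PZ m) :
    (CP m).po f g = ∑ j, (CP m).dy j (sgn _ j * (f * (CP m).dy (cj m j) g)) := by
  have h0 : ∑ j, sgn (PZ m) j * (CP m).dy j ((CP m).dy (cj m j) g) = 0 := by
    have h1 : ∑ j, sgn (PZ m) j * (CP m).dy j ((CP m).dy (cj m j) g)
        = - ∑ j, sgn (PZ m) j * (CP m).dy j ((CP m).dy (cj m j) g) := by
      nth_rewrite 1 [← sum_cj]
      rw [← Finset.sum_neg_distrib]
      refine Finset.sum_congr rfl fun j _ => ?_
      have := (CP m).d_comm j.castSucc (cj m j).castSucc g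
      change (CP m).dy j ((CP m).dy (cj m j) g) = (CP m).dy (cj m j) ((CP m).dy j g) at this
      rw [cj_cj, sgn_cj, this, neg_mul]
    have h2 : (2 : PZ m) * ∑ j, sgn (PZ m) j * (CP m).dy j ((CP m).dy (cj m j) g) = 0 := by
      linear_combination h1
    exact (mul_eq_zero.1 h2).resolve_left two_ne_zero
  have h3 : ∀ j, (CP m).dy j (sgn _ j * (f * (CP m).dy (cj m j) g))
      = sgn _ j * ((CP m).dy j f * (CP m).dy (cj m j) g)
        + f * (sgn _ j * (CP m).dy j ((CP m).dy (cj m j) g)) := by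
    intro j
    have hs : (CP m).dy j (sgn _ j) = 0 := by unfold sgn; split_ifs <;> simp
    simp only [Derivation.leibniz, smul_eq_mul, hs]
    ring
  rw [Finset.sum_congr rfl fun j _ => h3 j, Finset.sum_add_distrib, ← Finset.mul_sum, h0, mul_zero,
    add_zero]
  rfl

variable [CharP F p]

lemma topc_d (hp : p.Prime) (k : Fin (2 * m + 1)) (g : PZ m) :
    topc F p m ((CP m).d k g) = 0 := by
  change topc F p m (dP k g) = 0
  rw [topc_apply, dP_apply, MvPolynomial.coeff_pderiv]
  have : ((tau p m k : ℕ) : F) + 1 = 0 := by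
    change ((p - 1 : ℕ) : F) + 1 = 0
    rw [← Nat.cast_succ, Nat.succ_eq_add_one, Nat.sub_add_cancel hp.pos, CharP.cast_eq_zero]
  push_cast
  rw [this, mul_zero]

lemma topc_eu (hp : p.Prime) (g : PZ m) :
    topc F p m ((CP m).eu g) = - ((2 * m + 2 : ℕ) : F) * topc F p m g := by
  have h1 : ((p - 1 : ℕ) : F) = -1 := by
    rw [Nat.cast_sub hp.one_le, CharP.cast_eq_zero]; simp
  have h2 : wt (tau p m) = ((2 * m + 2 : ℕ) : ℤ) * ((p - 1 : ℕ) : ℤ) := by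
    simp only [wt, tau, Finsupp.equivFunOnFinite_symm_apply_apply, Finset.sum_const,
      Finset.card_univ, Fintype.card_fin, nsmul_eq_mul]
    push_cast
    ring
  rw [topc_apply, topc_apply, coeff_eu, h2]
  push_cast at h1 ⊢
  rw [h1]
  ring

/-- As `p ∣ m + 2`, brackets have no `x^τ`-component: the bracket of `f` and `g` is a sum of
derivatives up to the term `-(2m+4) D_n(f) g`. -/
lemma topc_br (hp : p.Prime) (hdvd : p ∣ m + 2) (f g : PZ m) :
    topc F p m ((CP m).br f g) = 0 := by
  have hdt : ∀ h, topc F p m ((CP m).dt h) = 0 := topc_d hp _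
  have heu : (CP m).dt ((CP m).eu f) = (CP m).eu ((CP m).dt f) + 2 * (CP m).dt f := by
    have h : ∀ j, (CP m).dt ((CP m).dy j f) = (CP m).dy j ((CP m).dt f) := fun j =>
      (CP m).d_comm _ _ f
    have h2 : (CP m).dt (2 : PZ m) = 0 := by exact_mod_cast (CP m).dt.map_natCast 2
    simp only [CData.eu, map_add, map_sum, Derivation.leibniz, smul_eq_mul, dt_y, dt_t, h, h2,
      mul_zero, add_zero, mul_one]
    ring
  have h1 : (CP m).br f g = (CP m).po f g + (CP m).eu (g * (CP m).dt f)
      - (CP m).dt (g * (CP m).eu f) + (CP m).dt (f * g + f * g) - (g * (CP m).dt f + g * (CP m).dt f)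
      := by
    rw [CData.br, eu_mul, Derivation.leibniz, map_add, Derivation.leibniz, heu]
    simp only [smul_eq_mul]
    ring
  have hpo : topc F p m ((CP m).po f g) = 0 := by
    rw [po_eq_sum_dy, map_sum]
    exact Finset.sum_eq_zero fun j _ => topc_d hp _ _
  rw [h1, map_sub, map_add, map_sub, map_add, hpo, topc_eu hp, hdt, hdt, map_add]
  have h3 : ((m + 2 : ℕ) : F) = 0 := (CharP.cast_eq_zero_iff F p _).2 hdvd
  push_cast at h3 ⊢
  linear_combination (-2 * topc F p m (g * (CP m).dt f)) * h3

lemma coeffT_tau (hp : p.Prime) (g : PZ m) :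
    coeffT F p (2 * m + 1) (fun _ => p - 1) (rho F p m g) = topc F p m g :=
  coeffT_rho (fun _ => Nat.sub_lt hp.pos one_pos) g

end Membership

/-! ### Membership of the inner representative in the contact algebra -/

section Main

variable {m : ℕ} {F : Type*} [Field F] {p : ℕ} [CharP F p]

lemma coeffT_dt (hp : p.Prime) (g : TruncP F p (2 * m + 1)) :
    coeffT F p (2 * m + 1) (fun k => if k = Fin.last (2 * m) then p - 2 else p - 1)
        ((CA F p m).dt g)
      = ((p - 1 : ℕ) : F) * coeffT F p (2 * m + 1) (fun _ => p - 1) g := by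
  have h2 := hp.two_le
  have hbox : ∀ k : Fin (2 * m + 1), (if k = Fin.last (2 * m) then p - 2 else p - 1) < p := by
    intro k; split_ifs <;> omega
  refine rho_add_induction (q := fun g => coeffT F p (2 * m + 1)
    (fun k => if k = Fin.last (2 * m) then p - 2 else p - 1) ((CA F p m).dt g)
      = ((p - 1 : ℕ) : F) * coeffT F p (2 * m + 1) (fun _ => p - 1) g)
    (fun r g => ?_) (fun a b ha hb => ?_) g
  · have h1 : (CA F p m).dt (r • rho F p m g) = r • rho F p m ((CP m).dt g) := by
      rw [← dt_rho]; exact dA_smul F p m _ _ _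
    rw [h1, map_smul, map_smul, coeffT_rho hbox, coeffT_tau hp, topc_apply]
    change r • (((dP (Fin.last (2 * m)) g).coeff _ : ℤ) : F) = _
    rw [dP_apply, MvPolynomial.coeff_pderiv]
    have e1 : Finsupp.equivFunOnFinite.symm
          (fun k : Fin (2 * m + 1) => if k = Fin.last (2 * m) then p - 2 else p - 1)
        + Finsupp.single (Fin.last (2 * m)) 1 = tau p m := by
      ext k
      rw [Finsupp.add_apply, Finsupp.single_apply]
      change (if k = Fin.last (2 * m) then p - 2 else p - 1) + _ = p - 1
      by_cases hk : k = Fin.last (2 * m)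
      · rw [if_pos hk, if_pos hk.symm]; omega
      · rw [if_neg hk, if_neg (Ne.symm hk), add_zero]
    have e2 : p - 1 = (p - 2) + 1 := by omega
    rw [e1, e2]
    simp only [smul_eq_mul, Finsupp.equivFunOnFinite_symm_apply_apply, if_true]
    push_cast
    ring
  · rw [map_add, map_add, map_add, ha, hb, mul_add]

variable {z : PZ m} (hz : DPow z)

lemma dpow_ppow {r : ℕ} (hr : 4 ≤ r) (a : Fin (2 * m + 1) → ℕ) : dpow hz r (ppow m a) = 0 := by
  unfold ppow
  split_ifs with h
  · rcases h with ⟨i, -, h⟩ | h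
    · rw [h, mon_q, dpow_mul]
      refine Finset.sum_eq_zero fun ij hij => ?_
      rw [Finset.HasAntidiagonal.mem_antidiagonal] at hij
      by_cases h1 : 2 ≤ ij.1
      · have : dpow hz ij.1 ((CP m).y i) = 0 := dpow_X hz h1 _
        rw [this, zero_mul]
      · have : dpow hz ij.2 ((CP m).y (cj m i)) = 0 := dpow_X hz (by omega) _
        rw [this, mul_zero]
    · rw [h, mon_t]
      exact dpow_X hz (by omega) _
  · exact map_zero _

lemma dpow_br_ppow_one {r : ℕ} (hr : 1 ≤ r) (a : Fin (2 * m + 1) → ℕ) :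
    dpow hz r ((CP m).br (ppow m a) 1) = 0 := by
  unfold ppow
  split_ifs with h
  · rcases h with ⟨i, -, h⟩ | h
    · have : (CP m).dt ((CP m).y i * (CP m).y (cj m i)) = 0 := by simp [dt_y]
      rw [h, mon_q, br_one_right, this, mul_zero, map_zero]
    · have : (-2 : PZ m) = (-2 : ℤ) • 1 := by simp
      rw [h, mon_t, br_t_one, this, map_zsmul, dpow_one hz hr, smul_zero]
  · rw [br_zero_left, map_zero]

/-- The element `w` with `ad w = φ ∘ ((ad f)^p - ad f^{[p]})` has no `x^τ`-component: its derivative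
by `x_n` has, at a variable not met by `ad z`, a weight which is a multiple of `p`. -/
lemma coeffT_w (hp : p.Prime) (hp2 : 2 < p) {j : Fin (2 * m)} (hj : (CP m).nop j.castSucc z = 0)
    (hj' : (CP m).nop (cj m j).castSucc z = 0) (a : Fin (2 * m + 1) → ℕ)
    {w : TruncP F p (2 * m + 1)}
    (hw : ∀ y, rho F p m (dpow hz p (pT p (mon a) (ppow m a) y)) = (CA F p m).br w (rho F p m y)) :
    coeffT F p (2 * m + 1) (fun _ => p - 1) w = 0 := by
  have hbox : ∀ k : Fin (2 * m + 1), (if k = Fin.last (2 * m) then p - 2 else p - 1) < p := by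
    intro k; split_ifs <;> omega
  set g := dpow hz p (((CP m).br (mon a))^[p] 1) with hg
  have h1 : rho F p m g = -2 * (CA F p m).dt w := by
    have := hw 1
    rw [pT_apply, map_sub, dpow_br_ppow_one hz hp.one_le, sub_zero, (rho F p m).map_one,
      br_one_right] at this
    exact this
  have h2 : (CP m).nop j.castSucc g = (p * a j.castSucc : ℤ) • g := by
    have e1 := weight_iterate j (nop_mon j.castSucc a) (nop_mon (cj m j).castSucc a)
      (g := 1) (u := 0) (v := 0) (by rw [nop_one, zero_smul]) (by rw [nop_one, zero_smul])
      (by ring) p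
    have e2 := (weight_iterate j (f := z) (α := 0) (β := 0) (by rw [hj, zero_smul])
      (by rw [hj', zero_smul]) e1.1 e1.2 (by ring) p).1
    rw [← dpow_spec hz] at e2
    refine nsmul_cancel p.factorial_ne_zero ?_
    have e3 : (CP m).nop j.castSucc (p.factorial • g) = p.factorial • (CP m).nop j.castSucc g :=
      map_nsmul (AddMonoidHom.mk' ((CP m).nop j.castSucc) (nop_add _ _)) _ _
    rw [← e3, e2, smul_comm]
    congr 2
    ring
  have h3 : coeffT F p (2 * m + 1) (fun k => if k = Fin.last (2 * m) then p - 2 else p - 1)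
      (rho F p m g) = 0 := by
    rw [coeffT_rho hbox]
    have e := congrArg (MvPolynomial.coeff (Finsupp.equivFunOnFinite.symm
      (fun k : Fin (2 * m + 1) => if k = Fin.last (2 * m) then p - 2 else p - 1))) h2
    rw [coeff_nop, MvPolynomial.coeff_smul, smul_eq_mul] at e
    simp only [Finsupp.equivFunOnFinite_symm_apply_apply, (Fin.castSucc_lt_last j).ne,
      if_false] at e
    have hne : ((p - 1 : ℕ) : ℤ) - p * a j.castSucc ≠ 0 := by
      rcases Nat.eq_zero_or_pos (a j.castSucc) with h0 | h0
      · rw [h0]; push_cast; omega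
      · have : (p : ℤ) * 1 ≤ p * a j.castSucc :=
          mul_le_mul_of_nonneg_left (by exact_mod_cast h0) (by positivity)
        omega
    have e2 : (((p - 1 : ℕ) : ℤ) - p * a j.castSucc) * g.coeff (Finsupp.equivFunOnFinite.symm
      (fun k : Fin (2 * m + 1) => if k = Fin.last (2 * m) then p - 2 else p - 1)) = 0 := by
      linear_combination e
    rw [(mul_eq_zero.1 e2).resolve_left hne, Int.cast_zero]
  have h4 : -2 * (CA F p m).dt w = (-2 : F) • (CA F p m).dt w := by
    rw [neg_smul, two_smul]
    ring
  rw [h1, h4, map_smul, coeffT_dt hp, smul_eq_mul] at h3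
  have hF : ∀ k : ℕ, 0 < k → k < p → ((k : ℕ) : F) ≠ 0 := by
    intro k hk hkp h
    rw [CharP.cast_eq_zero_iff F p] at h
    exact absurd (Nat.le_of_dvd hk h) (by omega)
  have hF2 : (-2 : F) ≠ 0 := by
    have := hF 2 (by norm_num) hp2
    exact neg_ne_zero.2 (by exact_mod_cast this)
  exact (mul_eq_zero.1 ((mul_eq_zero.1 h3).resolve_left hF2)).resolve_left
    (hF _ (by omega) (by omega))

/-- The Hochschild operator of `Sq(z)` at a monomial is inner, whenever `ad z` has divided powers and
does not meet some conjugate pair of variables. -/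
lemma isInnerOn_of_dpow {z : PZ m} (hz : DPow z) (hp : p.Prime) (hp5 : 5 ≤ p) (hdvd : p ∣ m + 2) {j : Fin (2 * m)}
    (hj : (CP m).nop j.castSucc z = 0) (hj' : (CP m).nop (cj m j).castSucc z = 0)
    (a : Fin (2 * m + 1) → ℕ) :
    IsInnerOn F (Ksub F p m) (Kbr F p m)
      (HOp p (Kbr F p m) (SqE F p (Kbr F p m) (rho F p m z)) (xpow F p (2 * m + 1) a)
        (KpPow F p m a)) := by
  have hp2 : 2 < p := by omega
  have hT := pT_ppow (F := F) hp hp2 a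
  obtain ⟨w, hw⟩ := exists_ad_dpow_pT hz hp hp2 hT
  rw [← rho_mon, ← rho_ppow]
  refine ⟨_, ?_, fun Y _ => HOp_SqE hz hp hT hw Y⟩
  · have hpow : p - 1 = (p - 2) + 1 := by omega
    refine mem_Ksub hdvd ?_
    rw [map_sub, coeffT_w hz hp hp2 hj hj' a hw, dpow_ppow hz (by omega), map_zero, sub_zero,
      coeffT_tau hp, hpow, Function.iterate_succ_apply', topc_br hp hdvd, sub_zero]

lemma dPow_one : DPow (1 : PZ m) where
  one := br_one_one _
  sq k := by
    induction k using Fin.lastCases with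
    | last =>
      have h : (CP m).br 1 (MvPolynomial.X (Fin.last (2 * m))) = 2 := br_one_t (CP m)
      have h2 : (CP m).dt (2 : PZ m) = 0 := by exact_mod_cast (CP m).dt.map_natCast 2
      rw [h, br_one_left, h2, mul_zero]
    | cast i =>
      have h : (CP m).br 1 (MvPolynomial.X i.castSucc) = 0 := br_one_y (CP m) i
      rw [h, br_zero_right]

lemma dPow_y (i : Fin (2 * m)) : DPow ((CP m).y i) where
  one := br_y_one _ i
  sq k := by
    induction k using Fin.lastCases with
    | last =>
      have h : (CP m).br ((CP m).y i) (MvPolynomial.X (Fin.last (2 * m))) = (CP m).y i :=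
        br_y_t (CP m) i
      rw [h, br_self]
    | cast l =>
      have h : (CP m).br ((CP m).y i) (MvPolynomial.X l.castSucc)
        = if i = cj m l then sgn _ i else 0 := br_y_y (CP m) i l
      rw [h]
      unfold sgn
      split_ifs
      · exact br_y_one _ i
      · rw [br_neg_right, br_y_one, neg_zero]
      · exact br_zero_right _ _

lemma exists_ne_pair (hm : 2 ≤ m) (i : Fin (2 * m)) : ∃ j, j ≠ i ∧ j ≠ cj m i := by
  have h : ({i, cj m i} : Finset (Fin (2 * m))).card < (Finset.univ : Finset (Fin (2 * m))).card := by
    rw [Finset.card_univ, Fintype.card_fin]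
    exact (Finset.card_le_two).trans_lt (by omega)
  obtain ⟨j, -, hj⟩ := Finset.exists_mem_notMem_of_card_lt_card h
  rw [Finset.mem_insert, Finset.mem_singleton, not_or] at hj
  exact ⟨j, hj⟩

end Main

end ContactAux

/-- If `p ∣ (m+2)`, then for every monomial `x^a ∈ K(n)` and every `1 ≤ i ≤ 2m`,
the maps `H_{Sq(1)}(x^a)` and `H_{Sq(x_i)}(x^a)` are inner derivations of the
contact algebra `K(n)`, where `(x^a)^{[p]} = x^a` if `x^a = x_i x_{i'}` (`i ≤ m`)
or `x^a = x_n`, and `0` otherwise. -/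
theorem contact_sq_HOp_inner
    (p m : ℕ) (hp : p.Prime) (hp5 : 5 ≤ p) (hm : 1 ≤ m) (hdvd : p ∣ (m + 2))
    (F : Type*) [Field F] [IsAlgClosed F] [CharP F p] :
    ∀ a : Fin (2 * m + 1) → ℕ, (∀ i, a i < p) → a ≠ (fun _ => p - 1) →
      IsInnerOn F (Ksub F p m) (Kbr F p m)
        (HOp p (Kbr F p m) (SqE F p (Kbr F p m) (1 : TruncP F p (2 * m + 1)))
          (xpow F p (2 * m + 1) a) (KpPow F p m a))
      ∧ ∀ i : Fin (2 * m),
          IsInnerOn F (Ksub F p m) (Kbr F p m)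
            (HOp p (Kbr F p m)
              (SqE F p (Kbr F p m) (xpow F p (2 * m + 1) (Pi.single i.castSucc 1)))
              (xpow F p (2 * m + 1) a) (KpPow F p m a)) := by
  intro a _ _
  have hm2 : 2 ≤ m := by
    have := Nat.le_of_dvd (by omega) hdvd
    omega
  refine ⟨?_, fun i => ?_⟩
  · have h := ContactAux.isInnerOn_of_dpow (F := F) ContactAux.dPow_one hp hp5 hdvd
      (j := ⟨0, by omega⟩) (ContactAux.nop_one _ _) (ContactAux.nop_one _ _) a
    rwa [(ContactAux.rho F p m).map_one] at h
  · obtain ⟨j, h1, h2⟩ := ContactAux.exists_ne_pair hm2 i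
    have h3 : cj m j ≠ i := fun h => h2 (by rw [← h, ContactAux.cj_cj])
    have hy : ∀ k : Fin (2 * m), k ≠ i →
        (ContactAux.CP m).nop k.castSucc ((ContactAux.CP m).y i) = 0 := fun k hk =>
      (ContactAux.nop_x (ContactAux.CP m) _ _).trans
        (if_neg fun h => hk (Fin.castSucc_injective _ h))
    have h := ContactAux.isInnerOn_of_dpow (F := F) (ContactAux.dPow_y i) hp hp5 hdvd
      (hy j h1) (hy _ h3) a
    have hr : ContactAux.rho F p m ((ContactAux.CP m).y i)
        = xpow F p (2 * m + 1) (Pi.single i.castSucc 1) := ContactAux.rho_X F p m _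
    rwa [hr] at h
end
end

section
/- Let n = 2 (so m = 1) and let i ∈ {1,2}. Then in the Hamiltonian algebra H(2): (ad x_i^2 x_{i'}^2)^k (x_i) = (−2σ(i))^k·x_i^{k+1}·x_{i'}^k for all 0 ≤ k ≤ p−1, and Φ(x_i^2 x_{i'}^2, x_i^{k+1} x_{i'}^k) = 2σ(i)·(k+1)·k·x_i^k·x_{i'}^{k−1} for all 1 ≤ k ≤ p−1. Consequently H_Φ(x_i^2 x_{i'}^2)(x_i) = 0, where (x_i^2 x_{i'}^2)^{[p]} = 0 is used in the definition of H. -/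
/-!
Write `x = x_i`, `y = x_{i'}`, `s = σ(i)`, and work with the products `x^a y^b` in `A(2)`, so that
everything is symmetric in the two values of `i`. The bracket of `x² y²` with `x^{k+1} y^k` is
`s (2k - 2(k+1)) x^{k+2} y^{k+1} = -2s x^{k+2} y^{k+1}` (`Hbr_step`), independently of `k`, which
gives the powers of `ad (x² y²)` by induction (`Hbr_iterate`).

In `Φ(x² y², x^{k+1} y^k)` the condition `δ ≤ (2, 2)`, `|δ| = 3` leaves two multi-indices, and their
contributions add up to `2s (k+1) k x^k y^{k-1}` (`Phi_monomial`). The result is again of the form to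
which `Hbr_iterate` applies, so every summand of `H_Φ(x² y²)(x)` is a multiple of `x^{p-1} y^{p-2}`
with coefficient `(-2s)^{p-1} 2s (k+1) k`, where `k` runs over `0, …, p-1`. The sum of the `(k+1) k` is
`(p-1) p (p+1) / 3`, which vanishes in characteristic `p ≥ 5` (`sum_eq_zero`).
-/

set_option maxHeartbeats 1000000
set_option synthInstance.maxHeartbeats 400000

open scoped BigOperators
noncomputable section

variable (F : Type*) [Field F] (p n : ℕ)

section Hamiltonian

variable (F : Type*) [Field F] (p m : ℕ) [CharP F p]

/-- The Poisson operator `D_H(f)(g) = ∑_{j=1}^{2m} σ(j)·D_j(f)·D_{j'}(g)` on `A(2m)`. -/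
def DHH (f g : TruncP F p (2 * m)) : TruncP F p (2 * m) :=
  ∑ j : Fin (2 * m), sg F m j • (Dj F p (2 * m) j f * Dj F p (2 * m) (cj m j) g)

/-- The bracket of the Hamiltonian algebra: the Poisson bracket `D_H(f)(g)` with its
constant term removed (realizing the quotient by the central element `1` on the span
of the non-constant monomials). -/
def Hbr (f g : TruncP F p (2 * m)) : TruncP F p (2 * m) :=
  DHH F p m f g - coeffT F p (2 * m) (fun _ => 0) (DHH F p m f g) • (1 : TruncP F p (2 * m))

/-- The Hamiltonian algebra `H(n)`, `n = 2m`: the span of the monomials `x^a` with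
`x^a ≠ 1, x^τ`. -/
def Hsub : Submodule F (TruncP F p (2 * m)) :=
  Submodule.span F
    {f | ∃ a : Fin (2 * m) → ℕ,
      (∀ i, a i < p) ∧ a ≠ (fun _ => 0) ∧ a ≠ (fun _ => p - 1) ∧ f = xpow F p (2 * m) a}

open scoped Classical in
/-- The `[p]`-th power of the monomial `x^a` in `H(n)`: `x^a` itself if
`x^a = x_i x_{i'}` for some `1 ≤ i ≤ m`, and `0` otherwise. -/
noncomputable def HpPow (a : Fin (2 * m) → ℕ) : TruncP F p (2 * m) :=
  if ∃ i : Fin (2 * m), (i : ℕ) < m ∧ a = Pi.single i 1 + Pi.single (cj m i) 1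
  then xpow F p (2 * m) a else 0

/-- The characterization of the cocycle `Φ` of `H(n)`: the alternating bilinear map
with `Φ(x^a, x^b) = ∑_{|δ|=3, δ≤a, δ̂≤b} binom(a,δ)·binom(b,δ̂)·σ(δ)·δ!·x^{a+b−δ−δ̂}`
on monomials. -/
def IsPhiH (Φ : TruncP F p (2 * m) → TruncP F p (2 * m) → TruncP F p (2 * m)) : Prop :=
  IsBilinear F Φ ∧ (∀ x, Φ x x = 0) ∧
    ∀ a b : Fin (2 * m) → ℕ, (∀ i, a i < p) → (∀ i, b i < p) →
      Φ (xpow F p (2 * m) a) (xpow F p (2 * m) b) =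
        ∑ d : Fin (2 * m) → Fin 4,
          if (∑ i, (d i : ℕ)) = 3 ∧ (∀ i, (d i : ℕ) ≤ a i) ∧ (∀ i, (d (cj m i) : ℕ) ≤ b i)
          then ((∏ i, (((a i).choose (d i) : ℕ) : F)) *
                (∏ i, (((b i).choose (d (cj m i)) : ℕ) : F)) *
                (∏ i, sg F m i ^ (d i : ℕ)) *
                (∏ i, (((d i : ℕ).factorial : ℕ) : F))) •
              xpow F p (2 * m)
                (a + b - (fun i => (d i : ℕ)) - (fun i => (d (cj m i) : ℕ)))
          else 0

end Hamiltonian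

section RankOne

variable {F : Type*} [Field F] {p : ℕ}

/-- The generator `x_j` of `A(2)`. -/
def gen (F : Type*) [Field F] (p : ℕ) (j : Fin (2 * 1)) : TruncP F p (2 * 1) :=
  Ideal.Quotient.mk _ (MvPolynomial.X j)

lemma gen_pow_eq_zero (j : Fin (2 * 1)) : gen F p j ^ p = 0 := by
  rw [gen, ← map_pow]
  exact Ideal.Quotient.eq_zero_iff_mem.mpr (Ideal.subset_span ⟨j, rfl⟩)

lemma xpow_pair (i : Fin (2 * 1)) (a b : ℕ) :
    xpow F p (2 * 1) (Pi.single i a + Pi.single (cj 1 i) b)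
      = gen F p i ^ a * gen F p (cj 1 i) ^ b := by
  have h : (Finsupp.equivFunOnFinite.symm (Pi.single i a + Pi.single (cj 1 i) b) :
      Fin (2 * 1) →₀ ℕ) = Finsupp.single i a + Finsupp.single (cj 1 i) b := by
    ext j
    simp [Finsupp.single_apply, Pi.single_apply, eq_comm]
  rw [xpow, h, gen, gen, ← map_pow, ← map_pow, ← map_mul, MvPolynomial.X_pow_eq_monomial,
    MvPolynomial.X_pow_eq_monomial, MvPolynomial.monomial_mul, one_mul]

lemma cj_ne (i : Fin (2 * 1)) : cj 1 i ≠ i := by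
  revert i; decide

lemma sg_mul_self (i : Fin (2 * 1)) : sg F 1 i * sg F 1 i = 1 := by
  unfold sg; split <;> simp

lemma sg_cj (i : Fin (2 * 1)) : sg F 1 (cj 1 i) = - sg F 1 i := by
  match i with
  | 0 => simp [sg, cj]
  | 1 => simp [sg, cj]

lemma cj_cj (i : Fin (2 * 1)) : cj 1 (cj 1 i) = i := by
  revert i; decide

lemma sum_pair {M : Type*} [AddCommMonoid M] (i : Fin (2 * 1)) (f : Fin (2 * 1) → M) :
    ∑ j, f j = f i + f (cj 1 i) := by
  have h : (Finset.univ : Finset (Fin (2 * 1))) = {i, cj 1 i} := by revert i; decide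
  rw [h, Finset.sum_pair (cj_ne i).symm]

lemma prod_pair {M : Type*} [CommMonoid M] (i : Fin (2 * 1)) (f : Fin (2 * 1) → M) :
    ∏ j, f j = f i * f (cj 1 i) := by
  have h : (Finset.univ : Finset (Fin (2 * 1))) = {i, cj 1 i} := by revert i; decide
  rw [h, Finset.prod_pair (cj_ne i).symm]

lemma forall_pair (i : Fin (2 * 1)) (P : Fin (2 * 1) → Prop) :
    (∀ j, P j) ↔ P i ∧ P (cj 1 i) := by
  have h : ∀ j, j = i ∨ j = cj 1 i := by revert i; decide
  refine ⟨fun H => ⟨H _, H _⟩, fun H j => ?_⟩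
  rcases h j with rfl | rfl
  exacts [H.1, H.2]

/-- Passing to the quotient by the constants does not affect a monomial divisible by `x_i`. The
exponents may exceed `p - 1`. -/
lemma coeffT_pair (hp : 0 < p) (i : Fin (2 * 1)) (a b : ℕ) :
    coeffT F p (2 * 1) (fun _ => 0) (gen F p i ^ (a + 1) * gen F p (cj 1 i) ^ b) = 0 := by
  rw [← xpow_pair, coeffT, dif_pos (fun _ => hp), xpow, liftF_mk]
  simp only [LinearMap.coe_mk, AddHom.coe_mk]
  rw [MvPolynomial.coeff_monomial, if_neg]
  intro h
  have := DFunLike.congr_fun h i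
  simp [(cj_ne i).symm] at this

variable [CharP F p]

lemma Dj_gen (i j : Fin (2 * 1)) : Dj F p (2 * 1) i (gen F p j) = if i = j then 1 else 0 := by
  have : Dj F p (2 * 1) i (gen F p j) = DjL F p (2 * 1) i (gen F p j) := rfl
  rw [this, gen, DjL_mk, MvPolynomial.pderiv_X, Pi.single_apply]
  rcases eq_or_ne i j with rfl | h
  · simp
  · simp [h, h.symm]

/-- Every `x_i^{k+1} x_{i'}^k` is moved to the next one by `ad (x_i² x_{i'}²)`: the difference
of the two exponents is constantly one, so the factor `-2σ(i)` does not depend on `k`. -/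
lemma Hbr_step (hp : 0 < p) (i : Fin (2 * 1)) (k : ℕ) :
    Hbr F p 1 (gen F p i ^ 2 * gen F p (cj 1 i) ^ 2) (gen F p i ^ (k + 1) * gen F p (cj 1 i) ^ k)
      = ((-2 : F) * sg F 1 i) • (gen F p i ^ (k + 2) * gen F p (cj 1 i) ^ (k + 1)) := by
  have h : DHH F p 1 (gen F p i ^ 2 * gen F p (cj 1 i) ^ 2)
        (gen F p i ^ (k + 1) * gen F p (cj 1 i) ^ k)
      = ((-2 : F) * sg F 1 i) • (gen F p i ^ (k + 2) * gen F p (cj 1 i) ^ (k + 1)) := by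
    rw [DHH, sum_pair i, sg_cj, cj_cj]
    simp only [Derivation.leibniz, Derivation.leibniz_pow, Dj_gen, if_true, cj_ne, (cj_ne i).symm,
      if_false, smul_eq_mul, mul_one]
    rw [neg_smul, ← sub_eq_add_neg, ← smul_sub, mul_comm (-2 : F), mul_smul, neg_smul, two_smul F]
    congr 1
    cases k with
    | zero => simp; ring
    | succ k => simp; ring
  rw [Hbr, h, map_smul, coeffT_pair hp]
  simp

lemma Hbr_smul (f g : TruncP F p (2 * 1)) (c : F) :
    Hbr F p 1 f (c • g) = c • Hbr F p 1 f g := by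
  have h : DHH F p 1 f (c • g) = c • DHH F p 1 f g := by
    simp only [DHH, Derivation.map_smul, mul_smul_comm, Finset.smul_sum]
    exact Finset.sum_congr rfl fun _ _ => smul_comm _ _ _
  rw [Hbr, Hbr, h, map_smul, smul_sub, smul_assoc]

/-- The starting coefficient `c` lets the same formula serve for the powers of `ad (x_i² x_{i'}²)`
applied after `Φ`. -/
lemma Hbr_iterate (hp : 0 < p) (i : Fin (2 * 1)) (l k : ℕ) (c : F) :
    (fun y => Hbr F p 1 (gen F p i ^ 2 * gen F p (cj 1 i) ^ 2) y)^[k]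
        (c • (gen F p i ^ (l + 1) * gen F p (cj 1 i) ^ l))
      = (c * ((-2 : F) * sg F 1 i) ^ k) •
          (gen F p i ^ (l + k + 1) * gen F p (cj 1 i) ^ (l + k)) := by
  induction k with
  | zero => simp
  | succ k ih =>
    rw [Function.iterate_succ_apply', ih, Hbr_smul, Hbr_step hp, smul_smul, mul_assoc, ← pow_succ]
    rfl

/-- Only `δ = (2, 1)` and `δ = (1, 2)` (in the coordinates `i`, `i'`) contribute, with coefficients
`-2σ(i)(k+1)k(k-1)` and `2σ(i)(k+1)k²`. For `k = 0` both sides vanish, whatever the truncated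
exponent `k - 1` is. -/
lemma Phi_monomial (hp5 : 5 ≤ p)
    (Φ : TruncP F p (2 * 1) → TruncP F p (2 * 1) → TruncP F p (2 * 1))
    (hΦ : IsPhiH F p 1 Φ) (i : Fin (2 * 1)) (k : ℕ) (hk : k ≤ p - 1) :
    Φ (gen F p i ^ 2 * gen F p (cj 1 i) ^ 2) (gen F p i ^ (k + 1) * gen F p (cj 1 i) ^ k)
      = ((2 : F) * sg F 1 i * ((k : F) + 1) * (k : F)) •
          (gen F p i ^ k * gen F p (cj 1 i) ^ (k - 1)) := by
  rcases hk.eq_or_lt with rfl | hlt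
  -- For `k = p - 1` the exponent `k + 1 = p` leaves the box where `Φ` is prescribed, but then
  -- the argument `x_i^p` is zero and so is the coefficient `k + 1`.
  · have h1 : p - 1 + 1 = p := by omega
    have h2 : ((p - 1 : ℕ) : F) + 1 = 0 := by
      rw [← Nat.cast_succ, Nat.succ_eq_add_one, h1, CharP.cast_eq_zero]
    rw [h1, gen_pow_eq_zero, zero_mul, (hΦ.1.1 _).map_zero, h2]
    simp
  rw [← xpow_pair i 2 2, ← xpow_pair i (k + 1) k, hΦ.2.2]
  rotate_left
  · rw [forall_pair i]
    simp [(cj_ne i).symm]; omega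
  · rw [forall_pair i]
    simp [(cj_ne i).symm]; omega
  let d₁ : Fin (2 * 1) → Fin 4 := fun j => if j = i then 2 else 1
  let d₂ : Fin (2 * 1) → Fin 4 := fun j => if j = i then 1 else 2
  have hne : d₁ ≠ d₂ := fun h => by simpa [d₁, d₂] using congrFun h i
  rw [← Finset.sum_subset (Finset.subset_univ {d₁, d₂}), Finset.sum_pair hne]
  · have hd1 : d₁ i = 2 := if_pos rfl
    have hd2 : d₁ (cj 1 i) = 1 := if_neg (cj_ne i)
    have hd3 : d₂ i = 1 := if_pos rfl
    have hd4 : d₂ (cj 1 i) = 2 := if_neg (cj_ne i)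
    have e1 (a b : ℕ) : (Pi.single i a + Pi.single (cj 1 i) b : Fin (2 * 1) → ℕ) i = a := by
      simp [(cj_ne i).symm]
    have e2 (a b : ℕ) :
        (Pi.single i a + Pi.single (cj 1 i) b : Fin (2 * 1) → ℕ) (cj 1 i) = b := by
      simp [(cj_ne i).symm]
    have hexp (d : Fin (2 * 1) → Fin 4) (h : (d i : ℕ) + (d (cj 1 i) : ℕ) = 3) :
        (Pi.single i 2 + Pi.single (cj 1 i) 2 + (Pi.single i (k + 1) + Pi.single (cj 1 i) k)
          - (fun j => (d j : ℕ)) - (fun j => (d (cj 1 j) : ℕ)) : Fin (2 * 1) → ℕ)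
        = Pi.single i k + Pi.single (cj 1 i) (k - 1) := by
      rw [funext_iff, forall_pair i]
      simp only [Pi.sub_apply, Pi.add_apply _ (_ + _), e1, e2, cj_cj]
      omega
    rw [hexp d₁ (by rw [hd1, hd2]; rfl), hexp d₂ (by rw [hd3, hd4]; rfl), xpow_pair]
    simp only [sum_pair i, prod_pair i, forall_pair i, cj_cj, hd1, hd2, hd3, hd4, e1, e2, sg_cj]
    have hs := sg_mul_self (F := F) i
    -- `δ = (2, 1)` needs `k ≥ 2` and `δ = (1, 2)` needs `k ≥ 1`.
    rcases k with _ | _ | l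
    · simp
    · simp
      congr 1
      linear_combination (4 * sg F 1 i) * hs
    · rw [if_pos (by simp), if_pos (by simp), ← add_smul]
      congr 1
      have hc1 : (((l + 1 + 1 : ℕ) : F)) * ((l : F) + 1) = ((l + 1 + 1).choose 2 : ℕ) * 2 := by
        have h : (l + 1 + 1) * (l + 1) = (l + 1 + 1).choose 2 * 2 := by
          simpa using Nat.add_one_mul_choose_eq (l + 1) 1
        exact_mod_cast congrArg (Nat.cast (R := F)) h
      have hc2 : (((l + 1 + 1 + 1 : ℕ) : F)) * ((l : F) + 2)
          = ((l + 1 + 1 + 1).choose 2 : ℕ) * 2 := by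
        have h : (l + 1 + 1 + 1) * (l + 2) = (l + 1 + 1 + 1).choose 2 * 2 := by
          simpa using Nat.add_one_mul_choose_eq (l + 2) 1
        exact_mod_cast congrArg (Nat.cast (R := F)) h
      simp
      push_cast at hc1 hc2
      linear_combination (sg F 1 i * (-4 * ((l : F) + 3) * ((l + 1 + 1).choose 2 : ℕ)
        + 4 * ((l + 1 + 1 + 1).choose 2 : ℕ) * ((l : F) + 2))) * hs
        + 2 * ((l : F) + 3) * sg F 1 i * hc1 - 2 * ((l : F) + 2) * sg F 1 i * hc2
  · intro d _ hd
    rw [if_neg]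
    rintro ⟨h1, h2, -⟩
    rw [sum_pair i] at h1
    rw [forall_pair i] at h2
    simp [(cj_ne i).symm] at h2
    apply hd
    have h3 : (d i : ℕ) = 2 ∧ (d (cj 1 i) : ℕ) = 1 ∨ (d i : ℕ) = 1 ∧ (d (cj 1 i) : ℕ) = 2 := by
      omega
    simp only [Finset.mem_insert, Finset.mem_singleton, funext_iff, forall_pair i, Fin.ext_iff]
    simpa [d₁, d₂, if_neg (cj_ne i)] using h3

/-- The sum is `(p-1)p(p+1)/3`, and `3` is invertible since `p ≥ 5`. -/
lemma sum_eq_zero (hp5 : 5 ≤ p) :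
    ∑ k ∈ Finset.range p, ((k : F) + 1) * (k : F) = 0 := by
  have h : ∀ n : ℕ, 3 * ∑ k ∈ Finset.range n, ((k : F) + 1) * (k : F)
      = ((n : F) - 1) * n * (n + 1) := by
    intro n
    induction n with
    | zero => simp
    | succ n ih => rw [Finset.sum_range_succ, mul_add, ih]; push_cast; ring
  have h3 : (3 : F) ≠ 0 := by
    intro h0
    have := (CharP.cast_eq_zero_iff F p 3).mp (by exact_mod_cast h0)
    have := Nat.le_of_dvd (by norm_num) this
    omega
  have := h p
  rw [CharP.cast_eq_zero, mul_zero, zero_mul] at this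
  exact (mul_eq_zero.mp this).resolve_left h3

end RankOne

/-- In `H(2)` (`m = 1`): `(ad x_i² x_{i'}²)^k (x_i) = (−2σ(i))^k x_i^{k+1} x_{i'}^k`
for `0 ≤ k ≤ p−1`, and `Φ(x_i² x_{i'}², x_i^{k+1} x_{i'}^k) = 2σ(i)(k+1)k·x_i^k x_{i'}^{k−1}`
for `1 ≤ k ≤ p−1`; consequently `H_Φ(x_i² x_{i'}²)(x_i) = 0` (using
`(x_i² x_{i'}²)^{[p]} = 0`). -/
theorem hamiltonian_rank_one_phi_computation
    (p : ℕ) (hp : p.Prime) (hp5 : 5 ≤ p)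
    (F : Type*) [Field F] [IsAlgClosed F] [CharP F p]
    (Φ : TruncP F p (2 * 1) → TruncP F p (2 * 1) → TruncP F p (2 * 1))
    (hΦ : IsPhiH F p 1 Φ) (i : Fin (2 * 1)) :
    (∀ k : ℕ, k ≤ p - 1 →
      (fun y => Hbr F p 1
          (xpow F p (2 * 1) (Pi.single i 2 + Pi.single (cj 1 i) 2)) y)^[k]
        (xpow F p (2 * 1) (Pi.single i 1))
      = ((-2 : F) * sg F 1 i) ^ k •
          xpow F p (2 * 1) (Pi.single i (k + 1) + Pi.single (cj 1 i) k))
    ∧ (∀ k : ℕ, 1 ≤ k → k ≤ p - 1 →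
        Φ (xpow F p (2 * 1) (Pi.single i 2 + Pi.single (cj 1 i) 2))
          (xpow F p (2 * 1) (Pi.single i (k + 1) + Pi.single (cj 1 i) k))
        = ((2 : F) * sg F 1 i * ((k : F) + 1) * (k : F)) •
            xpow F p (2 * 1) (Pi.single i k + Pi.single (cj 1 i) (k - 1)))
    ∧ HOp p (Hbr F p 1) Φ
        (xpow F p (2 * 1) (Pi.single i 2 + Pi.single (cj 1 i) 2)) 0
        (xpow F p (2 * 1) (Pi.single i 1)) = 0 := by
  have hp0 : 0 < p := hp.pos
  have hx : xpow F p (2 * 1) (Pi.single i 1) = gen F p i := by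
    simpa using xpow_pair (F := F) (p := p) i 1 0
  simp only [xpow_pair, hx]
  have hpow (k : ℕ) :
      (fun y => Hbr F p 1 (gen F p i ^ 2 * gen F p (cj 1 i) ^ 2) y)^[k] (gen F p i)
        = ((-2 : F) * sg F 1 i) ^ k • (gen F p i ^ (k + 1) * gen F p (cj 1 i) ^ k) := by
    simpa using Hbr_iterate (F := F) (p := p) hp0 i 0 k 1
  refine ⟨fun k _ => hpow k, fun k _ hk => Phi_monomial hp5 Φ hΦ i k hk, ?_⟩
  -- All summands of `H_Φ` are multiples of the same monomial `x_i^{p-1} x_{i'}^{p-2}`; only the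
  -- factor `(j + 1) j` varies.
  have hterm : ∀ j ∈ Finset.range p,
      (fun y => Hbr F p 1 (gen F p i ^ 2 * gen F p (cj 1 i) ^ 2) y)^[p - 1 - j]
        (Φ (gen F p i ^ 2 * gen F p (cj 1 i) ^ 2)
          ((fun y => Hbr F p 1 (gen F p i ^ 2 * gen F p (cj 1 i) ^ 2) y)^[j] (gen F p i)))
      = (((j : F) + 1) * j) • ((((-2 : F) * sg F 1 i) ^ (p - 1) * (2 * sg F 1 i)) •
          (gen F p i ^ (p - 1) * gen F p (cj 1 i) ^ (p - 2))) := by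
    intro j hj
    have hj' : j ≤ p - 1 := by have := Finset.mem_range.mp hj; omega
    rw [hpow, (hΦ.1.1 _).map_smul, Phi_monomial hp5 Φ hΦ i j hj', smul_smul, smul_smul]
    cases j with
    | zero =>
      -- `Φ` contributes the coefficient `0`, which the iterated bracket preserves.
      have := Hbr_iterate (F := F) (p := p) hp0 i 0 (p - 1) 0
      simpa using this
    | succ l =>
      rw [Nat.add_sub_cancel, Hbr_iterate hp0, show l + (p - 1 - (l + 1)) + 1 = p - 1 by omega,
        show l + (p - 1 - (l + 1)) = p - 2 by omega]
      congr 1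
      rw [show p - 1 = (l + 1) + (p - 1 - (l + 1)) by omega, Nat.add_sub_cancel_left, pow_add]
      ring
  have h0 : Φ 0 (gen F p i) = 0 := (hΦ.1.2 _).map_zero
  rw [HOp, h0, sub_zero, ← Finset.sum_range_reflect]
  calc
    _ = ∑ j ∈ Finset.range p, (((j : F) + 1) * j) • ((((-2 : F) * sg F 1 i) ^ (p - 1) *
          (2 * sg F 1 i)) • (gen F p i ^ (p - 1) * gen F p (cj 1 i) ^ (p - 2))) := by
      refine Finset.sum_congr rfl fun j hj => ?_
      have hj' := Finset.mem_range.mp hj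
      rw [show p - 1 - (p - 1 - j) = j by omega]
      exact hterm j hj
    _ = 0 := by rw [← Finset.sum_smul, sum_eq_zero hp5, zero_smul]
end
end
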